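/- arXiv:1401.2707 — 2 statements merged into one kernel-verified Lean document; each statement's English description precedes it below -/
import Mathlib

section
/- Let n range over even positive integers and for each such n let k(n) be a divisor of n with 3 ≤ k(n) ≤ K₀(n) − (log n)²/n. Then the proportion of 3-regular simple graphs on the vertex set {1,…,n} that contain a k(n)-cycle factor tends to 0 as n → ∞. -/
/-- `K₀(n) = log₂(2n/e) / (1 − (1/2)·log₂ 3)`. -/
noncomputable def K0 (n : ℕ) : ℝ :=
  Real.logb 2 (2 * n / Real.exp 1) / (1 - Real.logb 2 3 / 2)

/-- A graph is 3-regular (cubic) if every vertex has degree exactly 3. -/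
def IsCubic {V : Type*} (G : SimpleGraph V) : Prop :=
  ∀ v, (G.neighborSet v).ncard = 3

/-- `G` contains a `k`-cycle factor: a collection of `n/k` vertex-disjoint cycles of
length `k` covering all the vertices.  The factor is encoded by a map giving, for each
of the `n/k` cycles, the cyclic sequence of its `k` vertices. -/
def HasCycleFactor {n : ℕ} (G : SimpleGraph (Fin n)) (k : ℕ) : Prop :=
  ∃ f : Fin (n / k) → Fin k → Fin n,
    Function.Bijective (fun p : Fin (n / k) × Fin k => f p.1 p.2) ∧
    ∀ (c : Fin (n / k)) (i : Fin k),
      G.Adj (f c i) (f c ⟨((i : ℕ) + 1) % k, Nat.mod_lt _ i.pos⟩)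

/-!
A cubic graph with a `k`-cycle factor is the union of that factor and a perfect matching. With
`n = 2h` vertices and `M = n / k` cycles there are at most `n! / ((2k)^M M!)` choices for the first
and `n! / (2^h h!)` for the second.

The total number of cubic graphs is bounded below by `κ (3/2)^h h! (2h)! / (2h)`, through a
recursion. Deleting an edge `ab` together with its endpoints, and joining the other two neighbours
of `a` to each other, and likewise those of `b`, undoes the insertion of an edge into a cubic graph
on two fewer vertices, except when `a` or `b` lies in a triangle; there, contracting the triangle
also leads to a cubic graph on two fewer vertices. The two insertions together account for every
edge, up to an error bounded by the number of triangles. A switching argument shows that this number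
is `O(1)` on average, so the relative errors are `O(1 / h²)` and their product converges.

Writing `λ = log 2 - (log 3) / 2`, one has `K₀(n) λ = log (2n / e)`, and Stirling's formula bounds
the proportion by `O(√k exp (-M λ (K₀(n) - k)))`, which is `O(√(log n) n^(-λ²))` for the given `k`.
-/

namespace CycleFactor

open Finset SimpleGraph
open scoped symmDiff

/-! ### Toggling edges -/

section Surgery

variable {V : Type*}

/-- The degree of `v` in `G`, in the encoding used by `IsCubic`. -/
noncomputable def deg (G : SimpleGraph V) (v : V) : ℕ := (G.neighborSet v).ncard

/-- The graph obtained from `G` by switching the status (edge or non-edge) of the pair `xy`. -/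
def toggle (G : SimpleGraph V) (x y : V) : SimpleGraph V := G ∆ edge x y

theorem toggle_injective (x y : V) : Function.Injective (toggle · x y) :=
  symmDiff_left_injective (edge x y : SimpleGraph V)

theorem toggle_toggle (G : SimpleGraph V) (x y : V) : toggle (toggle G x y) x y = G :=
  symmDiff_symmDiff_cancel_right _ _

theorem toggle_adj (G : SimpleGraph V) {x y : V} (hxy : x ≠ y) (s t : V) :
    (toggle G x y).Adj s t ↔ ((s = x ∧ t = y ∨ s = y ∧ t = x) ↔ ¬ G.Adj s t) := by
  have : (toggle G x y).Adj s t ↔ (G.Adj s t ∧ ¬ (edge x y).Adj s t) ∨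
      ((edge x y).Adj s t ∧ ¬ G.Adj s t) := by
    simp [toggle, symmDiff]
  rw [this, edge_adj]
  grind

theorem deg_toggle_of_not_adj [DecidableEq V] [Finite V] {G : SimpleGraph V} {x y : V}
    (hxy : x ≠ y) (h : ¬ G.Adj x y) :
    deg (toggle G x y) = deg G + Pi.single x 1 + Pi.single y 1 := by
  have h' : ¬ G.Adj y x := fun hyx => h hyx.symm
  ext v
  simp only [deg, Pi.add_apply, Pi.single_apply]
  obtain rfl | hx := eq_or_ne v x
  · have : (toggle G v y).neighborSet v = insert y (G.neighborSet v) := by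
      ext t
      simp only [mem_neighborSet, toggle_adj _ hxy, Set.mem_insert_iff]
      grind
    rw [this, Set.ncard_insert_of_notMem (by simpa using h) (Set.toFinite _)]
    simp [hxy]
  obtain rfl | hy := eq_or_ne v y
  · have : (toggle G x v).neighborSet v = insert x (G.neighborSet v) := by
      ext t
      simp only [mem_neighborSet, toggle_adj _ hxy, Set.mem_insert_iff]
      grind
    rw [this, Set.ncard_insert_of_notMem (by simpa using h') (Set.toFinite _)]
    simp [hx]
  · have : (toggle G x y).neighborSet v = G.neighborSet v := by
      ext t
      simp only [mem_neighborSet, toggle_adj _ hxy]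
      grind
    simp [this, hx, hy]

theorem deg_toggle_of_adj [DecidableEq V] [Finite V] {G : SimpleGraph V} {x y : V}
    (h : G.Adj x y) :
    deg (toggle G x y) + Pi.single x 1 + Pi.single y 1 = deg G := by
  rw [← deg_toggle_of_not_adj h.ne (by rw [toggle_adj _ h.ne]; grind), toggle_toggle]

/-- Removes the edge `uv` of `G` and joins the isolated vertex `a` to `u` and `v`. -/
def subdivide (G : SimpleGraph V) (u v a : V) : SimpleGraph V :=
  toggle (toggle (toggle G u v) a u) a v

theorem subdivide_adj {G : SimpleGraph V} {u v a : V} (huv : G.Adj u v) (ha : ∀ t, ¬ G.Adj a t)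
    (s t : V) : (subdivide G u v a).Adj s t ↔ (G.Adj s t ∧ ¬ (s = u ∧ t = v ∨ s = v ∧ t = u)) ∨
      (s = a ∧ (t = u ∨ t = v)) ∨ (t = a ∧ (s = u ∨ s = v)) := by
  have hu : a ≠ u := by rintro rfl; exact ha _ huv
  have hv : a ≠ v := by rintro rfl; exact ha _ huv.symm
  have hst := G.adj_comm s t
  have := huv.ne
  have := huv.symm
  simp only [subdivide, toggle_adj _ hu, toggle_adj _ hv, toggle_adj _ huv.ne]
  grind

theorem deg_subdivide [DecidableEq V] [Finite V] {G : SimpleGraph V} {u v a : V}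
    (huv : G.Adj u v) (ha : ∀ t, ¬ G.Adj a t) :
    deg (subdivide G u v a) = deg G + Pi.single a 2 := by
  have hu : a ≠ u := by rintro rfl; exact ha _ huv
  have hv : a ≠ v := by rintro rfl; exact ha _ huv.symm
  have hau : ¬ (toggle G u v).Adj a u := by rw [toggle_adj _ huv.ne]; grind
  have hav : ¬ (toggle (toggle G u v) a u).Adj a v := by
    rw [toggle_adj _ hu, toggle_adj _ huv.ne]
    have := huv.ne
    grind
  rw [subdivide, deg_toggle_of_not_adj hv hav, deg_toggle_of_not_adj hu hau,
    ← deg_toggle_of_adj huv, show (2 : ℕ) = 1 + 1 from rfl, Pi.single_add]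
  abel

/-- Subdivides the edges `uv` and `wz` of `H` by the isolated vertices `a` and `b`, and joins `a`
to `b`. -/
def edgeInsertion (H : SimpleGraph V) (a b u v w z : V) : SimpleGraph V :=
  toggle (subdivide (subdivide H u v a) w z b) a b

/-- The situation in which `edgeInsertion H a b u v w z` makes sense: `a` and `b` are distinct
isolated vertices, and `uv` and `wz` are distinct edges (which may share an endpoint). -/
structure Insertable (H : SimpleGraph V) (a b u v w z : V) : Prop where
  ne : a ≠ b
  isolated_left : ∀ t, ¬ H.Adj a t
  isolated_right : ∀ t, ¬ H.Adj b t
  adj_left : H.Adj u v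
  adj_right : H.Adj w z
  edge_ne : ¬ (w = u ∧ z = v ∨ w = v ∧ z = u)

namespace Insertable

variable {H : SimpleGraph V} {a b u v w z : V}

theorem endpoints_ne (h : Insertable H a b u v w z) :
    u ≠ a ∧ v ≠ a ∧ w ≠ a ∧ z ≠ a ∧ u ≠ b ∧ v ≠ b ∧ w ≠ b ∧ z ≠ b := by
  have key {c s t : V} (hc : ∀ t, ¬ H.Adj c t) (hst : H.Adj s t) : s ≠ c ∧ t ≠ c :=
    ⟨fun e => hc t (e ▸ hst), fun e => hc s (e ▸ hst.symm)⟩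
  exact ⟨(key h.isolated_left h.adj_left).1, (key h.isolated_left h.adj_left).2,
    (key h.isolated_left h.adj_right).1, (key h.isolated_left h.adj_right).2,
    (key h.isolated_right h.adj_left).1, (key h.isolated_right h.adj_left).2,
    (key h.isolated_right h.adj_right).1, (key h.isolated_right h.adj_right).2⟩

theorem adj_subdivide (h : Insertable H a b u v w z) : (subdivide H u v a).Adj w z := by
  rw [subdivide_adj h.adj_left h.isolated_left]
  exact .inl ⟨h.adj_right, h.edge_ne⟩

theorem isolated_subdivide (h : Insertable H a b u v w z) (t : V) :
    ¬ (subdivide H u v a).Adj b t := by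
  rw [subdivide_adj h.adj_left h.isolated_left]
  have := h.isolated_right t
  have := h.endpoints_ne
  have := h.ne.symm
  grind

theorem edgeInsertion_adj (h : Insertable H a b u v w z) (s t : V) :
    (edgeInsertion H a b u v w z).Adj s t ↔
      (H.Adj s t ∧ ¬ (s = u ∧ t = v ∨ s = v ∧ t = u) ∧ ¬ (s = w ∧ t = z ∨ s = z ∧ t = w)) ∨
      (s = a ∧ (t = u ∨ t = v ∨ t = b)) ∨ (t = a ∧ (s = u ∨ s = v ∨ s = b)) ∨
      (s = b ∧ (t = w ∨ t = z)) ∨ (t = b ∧ (s = w ∨ s = z)) := by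
  have hH := H.adj_comm s t
  have := h.isolated_left t
  have := h.isolated_left s
  have := h.isolated_right t
  have := h.isolated_right s
  have := h.endpoints_ne
  have := h.edge_ne
  have := h.ne
  rw [edgeInsertion, toggle_adj _ h.ne, subdivide_adj h.adj_subdivide h.isolated_subdivide,
    subdivide_adj h.adj_left h.isolated_left]
  grind

theorem not_adj_of_edgeInsertion (h : Insertable H a b u v w z) :
    ¬ (edgeInsertion H a b u v w z).Adj u v ∧ ¬ (edgeInsertion H a b u v w z).Adj w z := by
  have := h.endpoints_ne
  simp only [h.edgeInsertion_adj]
  grind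

theorem deg_edgeInsertion [DecidableEq V] [Finite V] (h : Insertable H a b u v w z) :
    deg (edgeInsertion H a b u v w z) = deg H + Pi.single a 3 + Pi.single b 3 := by
  have hab : ¬ (subdivide (subdivide H u v a) w z b).Adj a b := by
    rw [subdivide_adj h.adj_subdivide h.isolated_subdivide,
      subdivide_adj h.adj_left h.isolated_left]
    have := h.isolated_left b
    have := h.endpoints_ne
    have := h.ne
    grind
  rw [edgeInsertion, deg_toggle_of_not_adj h.ne hab,
    deg_subdivide h.adj_subdivide h.isolated_subdivide, deg_subdivide h.adj_left h.isolated_left,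
    show (3 : ℕ) = 2 + 1 from rfl, Pi.single_add, Pi.single_add]
  abel

end Insertable

theorem edgeInsertion_injective (a b u v w z : V) :
    Function.Injective (edgeInsertion · a b u v w z) := fun _ _ h =>
  toggle_injective _ _ <| toggle_injective _ _ <| toggle_injective _ _ <| toggle_injective _ _ <|
    toggle_injective _ _ <| toggle_injective _ _ <| toggle_injective _ _ h

/-- Replaces the edges `wz` and `st` of `G` by the edges `ws` and `zt`. -/
def doubleSwitch (G : SimpleGraph V) (w z s t : V) : SimpleGraph V :=
  toggle (toggle (toggle (toggle G w z) s t) w s) z t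

theorem doubleSwitch_injective (w z s t : V) : Function.Injective (doubleSwitch · w z s t) :=
  fun _ _ h => toggle_injective _ _ <| toggle_injective _ _ <| toggle_injective _ _ <|
    toggle_injective _ _ h

/-- The situation in which `doubleSwitch G w z s t` makes sense. -/
structure Switchable (G : SimpleGraph V) (w z s t : V) : Prop where
  adj_left : G.Adj w z
  adj_right : G.Adj s t
  ne_left : w ≠ s
  not_adj_left : ¬ G.Adj w s
  ne_right : z ≠ t
  not_adj_right : ¬ G.Adj z t

namespace Switchable

variable {G : SimpleGraph V} {w z s t : V}

theorem doubleSwitch_adj (h : Switchable G w z s t) (x y : V) :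
    (doubleSwitch G w z s t).Adj x y ↔
      (G.Adj x y ∧ ¬ (x = w ∧ y = z ∨ x = z ∧ y = w) ∧ ¬ (x = s ∧ y = t ∨ x = t ∧ y = s)) ∨
      (x = w ∧ y = s ∨ x = s ∧ y = w) ∨ (x = z ∧ y = t ∨ x = t ∧ y = z) := by
  obtain ⟨hwz, hst, nws, hws, nzt, hzt⟩ := h
  have := hwz.symm
  have := hst.symm
  have := G.adj_comm x y
  have := G.adj_comm w s
  have := hwz.ne
  have := hst.ne
  simp only [doubleSwitch, toggle_adj _ hwz.ne, toggle_adj _ hst.ne, toggle_adj _ nws,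
    toggle_adj _ nzt]
  grind

theorem deg_doubleSwitch [Finite V] (h : Switchable G w z s t) :
    deg (doubleSwitch G w z s t) = deg G := by
  classical
  obtain ⟨hwz, hst, nws, hws, nzt, hzt⟩ := h
  have := hwz.ne
  have := hwz.symm
  have := hst.symm
  have h₁ : (toggle G w z).Adj s t := by
    simp only [toggle_adj _ hwz.ne]
    grind
  have h₂ : ¬ (toggle (toggle G w z) s t).Adj w s := by
    simp only [toggle_adj _ hwz.ne, toggle_adj _ hst.ne]
    grind
  have h₃ : ¬ (toggle (toggle (toggle G w z) s t) w s).Adj z t := by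
    simp only [toggle_adj _ hwz.ne, toggle_adj _ hst.ne, toggle_adj _ nws]
    grind
  rw [doubleSwitch, deg_toggle_of_not_adj nzt h₃, deg_toggle_of_not_adj nws h₂,
    ← deg_toggle_of_adj hwz, ← deg_toggle_of_adj h₁]
  abel

end Switchable

end Surgery

/-! ### Darts, flags and triangles of cubic graphs -/

section Counting

variable {V : Type*}

/-- The neighbourhood of `v` in `G`, as a finset. -/
noncomputable def nbr [Finite V] (G : SimpleGraph V) (v : V) : Finset V :=
  (Set.toFinite (G.neighborSet v)).toFinset

@[simp]
theorem mem_nbr [Finite V] {G : SimpleGraph V} {v w : V} : w ∈ nbr G v ↔ G.Adj v w := by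
  simp [nbr]

theorem card_nbr [Finite V] (G : SimpleGraph V) (v : V) : #(nbr G v) = deg G v :=
  (Set.ncard_eq_toFinset_card _ _).symm

open Classical in
/-- The darts (oriented edges) of `G`. -/
noncomputable def darts [Fintype V] (G : SimpleGraph V) : Finset (V × V) := {d | G.Adj d.1 d.2}

@[simp]
theorem mem_darts [Fintype V] {G : SimpleGraph V} {d : V × V} :
    d ∈ darts G ↔ G.Adj d.1 d.2 := by simp [darts]

/-- The tuples `⟨b, (w, z), (s, t)⟩` such that `swbzt` is a walk in `G`. -/
noncomputable def forks [Fintype V] (G : SimpleGraph V) : Finset (Σ _ : V, Σ _ : V × V, V × V) :=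
  univ.sigma fun b => (nbr G b ×ˢ nbr G b).sigma fun p => nbr G p.1 ×ˢ nbr G p.2

theorem Switchable.mem_forks_doubleSwitch [Fintype V] {G : SimpleGraph V} {w z s t b : V}
    (h : Switchable G w z s t) (hbw : G.Adj b w) (hbz : G.Adj b z) :
    ⟨b, (w, z), (s, t)⟩ ∈ forks (doubleSwitch G w z s t) := by
  have := hbw.symm
  have := hbz.symm
  have := hbw.ne
  have := hbz.ne
  have := h.adj_left.ne
  have := h.not_adj_left
  have := h.not_adj_right
  simp only [forks, mem_sigma, mem_univ, mem_product, mem_nbr, h.doubleSwitch_adj]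
  grind

variable [DecidableEq V]

/-- The graph `G` is cubic on the vertices of `A` and has no edge outside `A`. -/
def IsCubicOn (A : Finset V) (G : SimpleGraph V) : Prop := ∀ v, deg G v = if v ∈ A then 3 else 0

namespace IsCubicOn

variable {A : Finset V} {G : SimpleGraph V}

theorem sum_deg_le (hG : IsCubicOn A G) (S : Finset V) : ∑ v ∈ S, deg G v ≤ 3 * #S := by
  rw [mul_comm, ← smul_eq_mul]
  refine sum_le_card_nsmul _ _ _ fun v _ => ?_
  rw [hG v]
  split_ifs <;> simp

variable [Finite V]

theorem not_adj (hG : IsCubicOn A G) {v : V} (hv : v ∉ A) (w : V) : ¬ G.Adj v w := by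
  have := hG v
  rw [if_neg hv, ← card_nbr, card_eq_zero] at this
  rw [← mem_nbr, this]
  exact notMem_empty w

theorem card_nbr_of_adj (hG : IsCubicOn A G) {v w : V} (h : G.Adj v w) : #(nbr G v) = 3 := by
  rw [card_nbr, hG v, if_pos]
  by_contra hv
  exact hG.not_adj hv w h

theorem eq_of_adj (hG : IsCubicOn A G) {v x y s t : V} (hx : G.Adj v x) (hy : G.Adj v y)
    (hs : G.Adj v s) (ht : G.Adj v t) (hst : s ≠ t) (hxst : x ≠ s ∧ x ≠ t) (hyst : y ≠ s ∧ y ≠ t) :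
    x = y := by
  have : #(nbr G v \ {s, t}) ≤ 1 := by
    rw [card_sdiff_of_subset (by simp [insert_subset_iff, hs, ht]), hG.card_nbr_of_adj hx,
      card_pair hst]
  exact card_le_one.1 this x (by simp [hx, hxst]) y (by simp [hy, hyst])

theorem card_offDiag_erase (hG : IsCubicOn A G) {a b : V} (h : G.Adj a b) :
    #((nbr G a).erase b).offDiag = 2 := by
  rw [offDiag_card, card_erase_of_mem (mem_nbr.2 h), hG.card_nbr_of_adj h]

theorem doubleSwitch {w z s t : V} (hG : IsCubicOn A G) (h : Switchable G w z s t) :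
    IsCubicOn A (doubleSwitch G w z s t) := fun v => by rw [h.deg_doubleSwitch, hG v]

end IsCubicOn

variable [Fintype V]

open Classical in
/-- The set of cubic graphs on the vertex set `A`, seen as graphs on `V`. -/
noncomputable def cubicOn (A : Finset V) : Finset (SimpleGraph V) := {G | IsCubicOn A G}

@[simp]
theorem mem_cubicOn {A : Finset V} {G : SimpleGraph V} : G ∈ cubicOn A ↔ IsCubicOn A G := by
  simp [cubicOn]

theorem card_darts_fst_mem (G : SimpleGraph V) (S : Finset V) :
    #{d ∈ darts G | d.1 ∈ S} = ∑ v ∈ S, deg G v := by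
  have : ({d ∈ darts G | d.1 ∈ S} : Finset (V × V)) =
      (S.sigma (nbr G)).map (Equiv.sigmaEquivProd V V).toEmbedding := by
    ext d
    simp [and_comm]
  rw [this, card_map, card_sigma]
  simp only [card_nbr]

theorem card_darts_snd_mem (G : SimpleGraph V) (S : Finset V) :
    #{d ∈ darts G | d.2 ∈ S} = ∑ v ∈ S, deg G v := by
  rw [← card_darts_fst_mem]
  refine card_equiv (Equiv.prodComm V V) fun d => ?_
  simp [G.adj_comm]

/-- The ordered pairs of oriented edges of `G` whose underlying edges are distinct. -/
noncomputable def edgePairs (G : SimpleGraph V) : Finset (Σ _ : V × V, V × V) :=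
  (darts G).sigma fun d => darts G \ {d, d.swap}

/-- The darts `ab` of `G` together with an ordered pair `uv` of other neighbours of `a` and an
ordered pair `wz` of other neighbours of `b`, in the form `⟨(a, b), (u, v), (w, z)⟩`. -/
noncomputable def flags (G : SimpleGraph V) : Finset (Σ _ : V × V, (V × V) × (V × V)) :=
  (darts G).sigma fun d =>
    ((nbr G d.1).erase d.2).offDiag ×ˢ ((nbr G d.2).erase d.1).offDiag

theorem mem_flags {G : SimpleGraph V} {a b u v w z : V} :
    ⟨(a, b), (u, v), (w, z)⟩ ∈ flags G ↔ G.Adj a b ∧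
      (G.Adj a u ∧ G.Adj a v ∧ u ≠ b ∧ v ≠ b ∧ u ≠ v) ∧
      (G.Adj b w ∧ G.Adj b z ∧ w ≠ a ∧ z ≠ a ∧ w ≠ z) := by
  simp only [flags, mem_sigma, mem_darts, mem_product, mem_offDiag, mem_erase, mem_nbr]
  tauto

open Classical in
/-- The labelled triangles `(a, b, c)` of `G`. -/
noncomputable def triangles (G : SimpleGraph V) : Finset (V × V × V) :=
  {t | G.Adj t.1 t.2.1 ∧ G.Adj t.1 t.2.2 ∧ G.Adj t.2.1 t.2.2}

open Classical in
/-- The darts of `G` which can be switched with `wz`. -/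
noncomputable def switchDarts (G : SimpleGraph V) (w z : V) : Finset (V × V) :=
  {d | Switchable G w z d.1 d.2}

namespace IsCubicOn

variable {A : Finset V} {G : SimpleGraph V}

theorem card_darts (hG : IsCubicOn A G) : #(darts G) = 3 * #A := by
  have h := card_darts_fst_mem G univ
  rw [sum_congr rfl fun v _ => hG v, sum_ite_mem, sum_const, univ_inter, smul_eq_mul] at h
  simpa [mul_comm] using h

theorem card_edgePairs (hG : IsCubicOn A G) : #(edgePairs G) = 3 * #A * (3 * #A - 2) := by
  rw [edgePairs, card_sigma, sum_const_nat (m := 3 * #A - 2), hG.card_darts]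
  intro d hd
  have hd' : G.Adj d.1 d.2 := mem_darts.1 hd
  have hne : d ≠ d.swap := fun h => hd'.ne (congrArg Prod.fst h)
  rw [card_sdiff_of_subset, hG.card_darts, card_pair hne]
  simp [insert_subset_iff, hd', hd'.symm]

theorem card_flags (hG : IsCubicOn A G) : #(flags G) = 12 * #A := by
  rw [flags, card_sigma, sum_const_nat (m := 2 * 2), hG.card_darts]
  · ring
  · intro d hd
    rw [mem_darts] at hd
    rw [card_product, hG.card_offDiag_erase hd, hG.card_offDiag_erase hd.symm]

theorem card_forks (hG : IsCubicOn A G) : #(forks G) = 81 * #A := by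
  have h (b : V) : #((nbr G b ×ˢ nbr G b).sigma fun p => nbr G p.1 ×ˢ nbr G p.2) =
      if b ∈ A then 81 else 0 := by
    rw [card_sigma, sum_const_nat (m := 9), card_product, card_nbr, hG b]
    · split_ifs <;> rfl
    · intro p hp
      rw [mem_product, mem_nbr, mem_nbr] at hp
      rw [card_product, hG.card_nbr_of_adj hp.1.symm, hG.card_nbr_of_adj hp.2.symm]
  rw [forks, card_sigma, sum_congr rfl fun b _ => h b]
  simp [mul_comm]

open Classical in
theorem card_flags_adj_le (hG : IsCubicOn A G) :
    #{f ∈ flags G | G.Adj f.2.2.1 f.2.2.2} ≤ 2 * #(triangles G) := by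
  let corners : Finset (Σ _ : V × V, (V × V)) := (darts G).sigma fun d =>
    {p ∈ ((nbr G d.2).erase d.1).offDiag | G.Adj p.1 p.2}
  have mem_corners {a b w z : V} : ⟨(a, b), (w, z)⟩ ∈ corners ↔
      G.Adj a b ∧ (w ≠ a ∧ G.Adj b w) ∧ (z ≠ a ∧ G.Adj b z) ∧ w ≠ z ∧ G.Adj w z := by
    simp only [corners, mem_sigma, mem_darts, mem_filter, mem_offDiag, mem_erase, mem_nbr]
    tauto
  have hle : #corners ≤ #(triangles G) := by
    refine card_le_card_of_injOn (fun q => (q.1.2, q.2)) ?_ ?_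
    · rintro ⟨⟨a, b⟩, w, z⟩ h
      rw [mem_coe, mem_corners] at h
      simp [triangles, h]
    · rintro ⟨⟨a, b⟩, w, z⟩ h ⟨⟨a', b'⟩, w', z'⟩ h' heq
      obtain ⟨rfl, rfl, rfl⟩ : b = b' ∧ w = w' ∧ z = z' := by simpa using heq
      rw [mem_coe, mem_corners] at h h'
      obtain rfl : a = a' := hG.eq_of_adj h.1.symm h'.1.symm h.2.1.2 h.2.2.1.2 (by tauto)
        (by tauto) (by tauto)
      rfl
  have hfilter : {f ∈ flags G | G.Adj f.2.2.1 f.2.2.2} = (darts G).sigma fun d =>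
      ((nbr G d.1).erase d.2).offDiag ×ˢ
        {p ∈ ((nbr G d.2).erase d.1).offDiag | G.Adj p.1 p.2} := by
    ext
    simp only [flags, mem_filter, mem_sigma, mem_product]
    tauto
  calc #{f ∈ flags G | G.Adj f.2.2.1 f.2.2.2} = 2 * #corners := by
        rw [hfilter, card_sigma, card_sigma, mul_sum]
        refine sum_congr rfl fun d hd => ?_
        rw [card_product, hG.card_offDiag_erase (mem_darts.1 hd)]
    _ ≤ 2 * #(triangles G) := by gcongr

theorem le_card_switchDarts (hG : IsCubicOn A G) {w z : V} (h : G.Adj w z) :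
    3 * #A ≤ #(switchDarts G w z) + 24 := by
  have hN {v v' : V} (h : G.Adj v v') : ∑ x ∈ insert v (nbr G v), deg G x ≤ 12 := by
    refine (hG.sum_deg_le _).trans ?_
    rw [card_insert_of_notMem (by simp), hG.card_nbr_of_adj h]
  have hcover : darts G ⊆ switchDarts G w z ∪ ({d ∈ darts G | d.1 ∈ insert w (nbr G w)} ∪
      {d ∈ darts G | d.2 ∈ insert z (nbr G z)}) := by
    intro d hd
    rw [mem_darts] at hd
    by_cases h₁ : d.1 ∈ insert w (nbr G w)
    · simp [hd, h₁]
    by_cases h₂ : d.2 ∈ insert z (nbr G z)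
    · simp [hd, h₂]
    simp only [mem_insert, mem_nbr, not_or] at h₁ h₂
    simp [switchDarts, show Switchable G w z d.1 d.2 from
      ⟨h, hd, Ne.symm h₁.1, h₁.2, Ne.symm h₂.1, h₂.2⟩]
  calc 3 * #A = #(darts G) := hG.card_darts.symm
    _ ≤ #(switchDarts G w z) + (#{d ∈ darts G | d.1 ∈ insert w (nbr G w)} +
          #{d ∈ darts G | d.2 ∈ insert z (nbr G z)}) :=
        (card_le_card hcover).trans <| (card_union_le _ _).trans <|
          Nat.add_le_add_left (card_union_le _ _) _
    _ ≤ #(switchDarts G w z) + (12 + 12) := by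
        rw [card_darts_fst_mem, card_darts_snd_mem]
        gcongr
        exacts [hN h, hN h.symm]

end IsCubicOn

theorem sum_card_triangles_mul_le (A : Finset V) :
    (∑ G ∈ cubicOn A, #(triangles G)) * (3 * #A - 24) ≤ 81 * #A * #(cubicOn A) := by
  calc (∑ G ∈ cubicOn A, #(triangles G)) * (3 * #A - 24)
      ≤ ∑ G ∈ cubicOn A, #((triangles G).sigma fun t => switchDarts G t.2.1 t.2.2) := by
        rw [sum_mul]
        refine sum_le_sum fun G hG => ?_
        rw [card_sigma, ← smul_eq_mul]
        refine card_nsmul_le_sum _ _ _ fun t ht => ?_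
        simp only [triangles, mem_filter] at ht
        have := (mem_cubicOn.1 hG).le_card_switchDarts ht.2.2.2
        omega
    _ = #((cubicOn A).sigma fun G => (triangles G).sigma fun t => switchDarts G t.2.1 t.2.2) :=
        (card_sigma _ _).symm
    _ ≤ #((cubicOn A).sigma forks) := by
        refine card_le_card_of_injOn (fun ⟨G, ⟨b, w, z⟩, s, t⟩ =>
          ⟨CycleFactor.doubleSwitch G w z s t, ⟨b, (w, z), (s, t)⟩⟩) ?_ ?_
        · rintro ⟨G, ⟨b, w, z⟩, s, t⟩ h
          simp only [coe_sigma, Set.mem_sigma_iff, mem_coe, mem_cubicOn, triangles, switchDarts,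
            mem_filter, mem_univ, true_and] at h ⊢
          obtain ⟨hG, ⟨hbw, hbz, -⟩, hs⟩ := h
          exact ⟨hG.doubleSwitch hs, hs.mem_forks_doubleSwitch hbw hbz⟩
        · rintro ⟨G, ⟨b, w, z⟩, s, t⟩ - ⟨G', ⟨b', w', z'⟩, s', t'⟩ - heq
          simp only [Sigma.mk.injEq, heq_eq_eq, Prod.mk.injEq] at heq
          obtain ⟨hG, rfl, ⟨rfl, rfl⟩, rfl, rfl⟩ := heq
          rw [doubleSwitch_injective w z s t hG]
    _ = 81 * #A * #(cubicOn A) := by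
        rw [card_sigma, sum_const_nat fun G hG => (mem_cubicOn.1 hG).card_forks, mul_comm]

/-! ### The recursion for the number of cubic graphs -/

namespace Insertable

variable {H : SimpleGraph V} {a b u v w z : V}

theorem isCubicOn_univ (h : Insertable H a b u v w z) (hH : IsCubicOn {a, b}ᶜ H) :
    IsCubicOn univ (edgeInsertion H a b u v w z) := fun t => by
  have := h.ne
  simp only [h.deg_edgeInsertion, Pi.add_apply, Pi.single_apply, hH t, mem_compl, mem_insert,
    mem_singleton, mem_univ]
  grind

theorem mem_flags (h : Insertable H a b u v w z) :
    ⟨(a, b), (u, v), (w, z)⟩ ∈ flags (edgeInsertion H a b u v w z) := by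
  have := h.endpoints_ne
  have := h.adj_left.ne
  have := h.adj_right.ne
  simp only [CycleFactor.mem_flags, h.edgeInsertion_adj]
  grind

end Insertable

/-- The triples of two distinct vertices and a cubic graph on the other vertices. -/
noncomputable def cubicOnCompl (V : Type*) [Fintype V] [DecidableEq V] :
    Finset (Σ _ : V × V, SimpleGraph V) :=
  (univ : Finset V).offDiag.sigma fun p => cubicOn {p.1, p.2}ᶜ

theorem mem_cubicOnCompl {a b : V} {H : SimpleGraph V} :
    ⟨(a, b), H⟩ ∈ cubicOnCompl V ↔ a ≠ b ∧ IsCubicOn {a, b}ᶜ H := by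
  simp [cubicOnCompl]

theorem insertable_of_mem {a b u v w z : V} {H : SimpleGraph V} (hH : ⟨(a, b), H⟩ ∈ cubicOnCompl V)
    (huv : H.Adj u v) (hwz : H.Adj w z) (hne : ¬ (w = u ∧ z = v ∨ w = v ∧ z = u)) :
    Insertable H a b u v w z := by
  rw [mem_cubicOnCompl] at hH
  exact ⟨hH.1, hH.2.not_adj (by simp), hH.2.not_adj (by simp), huv, hwz, hne⟩

open Classical in
theorem card_sigma_edgePairs_le :
    #((cubicOnCompl V).sigma fun q => edgePairs q.2) ≤
      #((cubicOn (univ : Finset V)).sigma fun G =>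
        {f ∈ flags G | ¬ G.Adj f.2.1.1 f.2.1.2 ∧ ¬ G.Adj f.2.2.1 f.2.2.2}) := by
  refine card_le_card_of_injOn (fun ⟨⟨(a, b), H⟩, (u, v), (w, z)⟩ =>
    ⟨edgeInsertion H a b u v w z, ⟨(a, b), (u, v), (w, z)⟩⟩) ?_ ?_
  · rintro ⟨⟨⟨a, b⟩, H⟩, ⟨u, v⟩, w, z⟩ h
    simp only [edgePairs, mem_coe, mem_sigma, mem_sdiff, mem_insert, mem_singleton, mem_darts,
      Prod.swap_prod_mk, Prod.mk.injEq] at h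
    obtain ⟨hH, huv, hwz, hne⟩ := h
    have hi := insertable_of_mem hH huv hwz hne
    simp only [mem_coe, mem_sigma, mem_cubicOn, mem_filter]
    exact ⟨hi.isCubicOn_univ (mem_cubicOnCompl.1 hH).2, hi.mem_flags, hi.not_adj_of_edgeInsertion⟩
  · rintro ⟨⟨⟨a, b⟩, H⟩, ⟨u, v⟩, w, z⟩ - ⟨⟨⟨a', b'⟩, H'⟩, ⟨u', v'⟩, w', z'⟩ - heq
    simp only [Sigma.mk.injEq, heq_eq_eq, Prod.mk.injEq] at heq
    obtain ⟨hH, ⟨rfl, rfl⟩, ⟨rfl, rfl⟩, rfl, rfl⟩ := heq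
    rw [edgeInsertion_injective _ _ _ _ _ _ hH]

/-- Replaces the tail `a` of a flag by a triangle `axy`; this is the edge insertion at the adjacent
edges `ap` and `aq`. -/
def triangleInsertion : (Σ _ : (Σ _ : V × V, SimpleGraph V), Σ _ : V × V, (V × V) × (V × V)) →
    Σ _ : SimpleGraph V, Σ _ : V × V, (V × V) × (V × V) :=
  fun ⟨⟨(x, y), H⟩, ⟨(a, b), (p, q), (w, z)⟩⟩ =>
    ⟨edgeInsertion H x y a p a q, ⟨(a, b), (x, y), (w, z)⟩⟩

theorem insertable_of_mem_flags {x y a b p q w z : V} {H : SimpleGraph V}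
    (hH : ⟨(x, y), H⟩ ∈ cubicOnCompl V) (hf : ⟨(a, b), (p, q), (w, z)⟩ ∈ flags H) :
    Insertable H x y a p a q := by
  rw [mem_flags] at hf
  exact insertable_of_mem hH hf.2.1.1 hf.2.1.2.1 (by grind)

theorem triangleInsertion_mem {x y a b p q w z : V} {H : SimpleGraph V}
    (hH : ⟨(x, y), H⟩ ∈ cubicOnCompl V) (hf : ⟨(a, b), (p, q), (w, z)⟩ ∈ flags H) :
    IsCubicOn univ (edgeInsertion H x y a p a q) ∧
      ⟨(a, b), (x, y), (w, z)⟩ ∈ flags (edgeInsertion H x y a p a q) ∧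
      (edgeInsertion H x y a p a q).Adj x y ∧
      ((edgeInsertion H x y a p a q).Adj w z ↔ H.Adj w z) := by
  have hi := insertable_of_mem_flags hH hf
  refine ⟨hi.isCubicOn_univ (mem_cubicOnCompl.1 hH).2, ?_⟩
  rw [mem_flags] at hf
  have := hf.1.ne
  have := hi.ne
  have := hi.endpoints_ne
  have := hi.isolated_left b
  have := hi.isolated_left w
  have := hi.isolated_left z
  have := hi.isolated_right b
  have := hi.isolated_right w
  have := hi.isolated_right z
  have := H.adj_comm b w
  have := H.adj_comm b z
  have := H.adj_comm b x
  have := H.adj_comm b y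
  simp only [mem_flags, hi.edgeInsertion_adj]
  grind

theorem injOn_triangleInsertion :
    Set.InjOn triangleInsertion (SetLike.coe ((cubicOnCompl V).sigma fun q => flags q.2)) := by
  rintro ⟨⟨⟨x, y⟩, H⟩, ⟨a, b⟩, ⟨p, q⟩, w, z⟩ h ⟨⟨⟨x', y'⟩, H'⟩, ⟨a', b'⟩, ⟨p', q'⟩, w', z'⟩ h' heq
  rw [mem_coe, mem_sigma] at h h'
  simp only [triangleInsertion, Sigma.mk.injEq, heq_eq_eq, Prod.mk.injEq] at heq
  obtain ⟨hG, ⟨rfl, rfl⟩, ⟨rfl, rfl⟩, rfl, rfl⟩ := heq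
  have hi := insertable_of_mem_flags h.1 h.2
  have hi' := insertable_of_mem_flags h'.1 h'.2
  have hp : (edgeInsertion H x y a p a q).Adj x p' := by rw [hG, hi'.edgeInsertion_adj]; simp
  have hq : (edgeInsertion H x y a p a q).Adj y q' := by rw [hG, hi'.edgeInsertion_adj]; simp
  have := hi.ne
  have := hi.endpoints_ne
  have := hi'.endpoints_ne
  have := hi'.adj_left.ne
  have := hi'.adj_right.ne
  have := hi.isolated_left
  have := hi.isolated_right
  rw [hi.edgeInsertion_adj] at hp hq
  obtain rfl : p = p' := by grind
  obtain rfl : q = q' := by grind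
  rw [edgeInsertion_injective _ _ _ _ _ _ hG]

open Classical in
theorem card_sigma_flags_le :
    #((cubicOnCompl V).sigma fun q => flags q.2) ≤
      #((cubicOn (univ : Finset V)).sigma fun G => {f ∈ flags G | G.Adj f.2.1.1 f.2.1.2}) := by
  refine card_le_card_of_injOn triangleInsertion ?_ injOn_triangleInsertion
  rintro ⟨⟨⟨x, y⟩, H⟩, ⟨a, b⟩, ⟨p, q⟩, w, z⟩ h
  rw [mem_coe, mem_sigma] at h
  obtain ⟨hG, hf, hxy, -⟩ := triangleInsertion_mem h.1 h.2
  simp [triangleInsertion, hG, hf, hxy]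

open Classical in
theorem card_sigma_flags_not_adj_le :
    #((cubicOnCompl V).sigma fun q => {f ∈ flags q.2 | ¬ q.2.Adj f.2.2.1 f.2.2.2}) ≤
      #((cubicOn (univ : Finset V)).sigma fun G =>
        {f ∈ flags G | G.Adj f.2.1.1 f.2.1.2 ∧ ¬ G.Adj f.2.2.1 f.2.2.2}) := by
  refine card_le_card_of_injOn triangleInsertion ?_ (injOn_triangleInsertion.mono ?_)
  · rintro ⟨⟨⟨x, y⟩, H⟩, ⟨a, b⟩, ⟨p, q⟩, w, z⟩ h
    rw [mem_coe, mem_sigma, mem_filter] at h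
    obtain ⟨hG, hf, hxy, hwz⟩ := triangleInsertion_mem h.1 h.2.1
    have hwz' : ¬ H.Adj w z := h.2.2
    simp [triangleInsertion, hG, hf, hxy, hwz, hwz']
  · exact coe_subset.2 (sigma_mono subset_rfl fun _ => filter_subset _ _)

open Classical in
theorem card_flags_eq (G : SimpleGraph V) :
    #(flags G) = #{f ∈ flags G | ¬ G.Adj f.2.1.1 f.2.1.2 ∧ ¬ G.Adj f.2.2.1 f.2.2.2} +
      #{f ∈ flags G | G.Adj f.2.1.1 f.2.1.2} +
      #{f ∈ flags G | G.Adj f.2.1.1 f.2.1.2 ∧ ¬ G.Adj f.2.2.1 f.2.2.2} := by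
  have hswap : #{f ∈ flags G | G.Adj f.2.1.1 f.2.1.2 ∧ ¬ G.Adj f.2.2.1 f.2.2.2} =
      #{f ∈ flags G | ¬ G.Adj f.2.1.1 f.2.1.2 ∧ G.Adj f.2.2.1 f.2.2.2} := by
    refine card_nbij' (fun f => ⟨f.1.swap, f.2.swap⟩) (fun f => ⟨f.1.swap, f.2.swap⟩) ?_ ?_
      (fun _ _ => rfl) (fun _ _ => rfl) <;>
    · rintro ⟨⟨a, b⟩, ⟨u, v⟩, w, z⟩ h
      simp only [mem_coe, mem_filter, mem_flags, Prod.swap_prod_mk] at h ⊢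
      have := h.1.1.symm
      tauto
  rw [hswap, ← card_filter_add_card_filter_not (s := flags G) fun f => G.Adj f.2.1.1 f.2.1.2,
    ← card_filter_add_card_filter_not
      (s := {f ∈ flags G | ¬ G.Adj f.2.1.1 f.2.1.2}) fun f => G.Adj f.2.2.1 f.2.2.2,
    filter_filter, filter_filter]
  ring

open Classical in
/-- The number of edge insertions on `H` plus the number of triangle insertions on `H`, where those
at a flag whose last two vertices are not adjacent count twice: by reversal they also account for
the flags with a triangle at the head only. -/
noncomputable def insertionCount (H : SimpleGraph V) : ℕ :=
  #(edgePairs H) + #(flags H) + #{f ∈ flags H | ¬ H.Adj f.2.2.1 f.2.2.2}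

theorem sum_insertionCount_le :
    ∑ q ∈ cubicOnCompl V, insertionCount q.2 ≤
      12 * Fintype.card V * #(cubicOn (univ : Finset V)) := by
  classical
  have h₁ := card_sigma_edgePairs_le (V := V)
  have h₂ := card_sigma_flags_le (V := V)
  have h₃ := card_sigma_flags_not_adj_le (V := V)
  simp only [card_sigma] at h₁ h₂ h₃
  calc ∑ q ∈ cubicOnCompl V, insertionCount q.2
      ≤ ∑ G ∈ cubicOn (univ : Finset V), #(flags G) := by
        rw [sum_congr rfl fun G _ => card_flags_eq G]
        simp only [insertionCount, sum_add_distrib]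
        gcongr
    _ = 12 * Fintype.card V * #(cubicOn (univ : Finset V)) := by
        rw [sum_const_nat fun G hG => (mem_cubicOn.1 hG).card_flags, card_univ, mul_comm]

open Classical in
theorem IsCubicOn.le_card_flags_not_adj {A : Finset V} {G : SimpleGraph V} (hG : IsCubicOn A G) :
    12 * #A ≤ #{f ∈ flags G | ¬ G.Adj f.2.2.1 f.2.2.2} + 2 * #(triangles G) := by
  have h := card_filter_add_card_filter_not (s := flags G) fun f => G.Adj f.2.2.1 f.2.2.2
  have := hG.card_flags_adj_le
  rw [hG.card_flags] at h
  omega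

theorem sum_card_triangles_le {A : Finset V} (hA : 9 ≤ #A) :
    ∑ G ∈ cubicOn A, (#(triangles G) : ℝ) ≤ 27 * #A / (#A - 8) * #(cubicOn A) := by
  have hA' : (9 : ℝ) ≤ #A := by exact_mod_cast hA
  have hpos : (0 : ℝ) < #A - 8 := by linarith
  have h : (∑ G ∈ cubicOn A, (#(triangles G) : ℝ)) * (3 * #A - 24 : ℕ) ≤
      81 * #A * #(cubicOn A) := by
    exact_mod_cast sum_card_triangles_mul_le A
  rw [Nat.cast_sub (by omega)] at h
  push_cast at h
  rw [div_mul_eq_mul_div, le_div_iff₀ hpos]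
  linarith

theorem le_sum_insertionCount {A : Finset V} (hA : 9 ≤ #A) :
    (#A * (9 * #A + 18 - 54 / (#A - 8)) : ℝ) * #(cubicOn A) ≤
      ∑ H ∈ cubicOn A, (insertionCount H : ℝ) := by
  have hA' : (9 : ℝ) ≤ #A := by exact_mod_cast hA
  have hpos : (0 : ℝ) < #A - 8 := by linarith
  calc (#A * (9 * #A + 18 - 54 / (#A - 8)) : ℝ) * #(cubicOn A)
      = #(cubicOn A) * (3 * #A * (3 * #A - 2) + 12 * #A + 12 * #A) -
          2 * (27 * #A / (#A - 8) * #(cubicOn A)) := by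
        field_simp
        ring
    _ ≤ #(cubicOn A) * (3 * #A * (3 * #A - 2) + 12 * #A + 12 * #A) -
          2 * ∑ G ∈ cubicOn A, (#(triangles G) : ℝ) := by
        gcongr
        exact sum_card_triangles_le hA
    _ = ∑ H ∈ cubicOn A,
          ((3 * #A * (3 * #A - 2) + 12 * #A + 12 * #A : ℝ) - 2 * #(triangles H)) := by
        rw [sum_sub_distrib, mul_sum, sum_const, nsmul_eq_mul]
    _ ≤ ∑ H ∈ cubicOn A, (insertionCount H : ℝ) := by
        classical
        refine sum_le_sum fun H hH => ?_
        rw [mem_cubicOn] at hH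
        have h : (12 * #A : ℝ) ≤ #{f ∈ flags H | ¬ H.Adj f.2.2.1 f.2.2.2} +
            2 * #(triangles H) := by
          exact_mod_cast hH.le_card_flags_not_adj
        rw [insertionCount, hH.card_edgePairs, hH.card_flags]
        push_cast [Nat.cast_sub (show 2 ≤ 3 * #A by omega)]
        linarith

end Counting

/-- The number of cubic graphs on `n` labelled vertices. -/
noncomputable def cubicCount (n : ℕ) : ℕ := #(cubicOn (univ : Finset (Fin n)))

theorem deg_map {V W : Type*} (f : W ↪ V) (G : SimpleGraph W) (w : W) :
    deg (G.map f) (f w) = deg G w := by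
  rw [deg, neighborSet_map, Set.ncard_image_of_injective _ f.injective, deg]

theorem deg_map_of_notMem_range {V W : Type*} (f : W ↪ V) (G : SimpleGraph W) {v : V}
    (hv : v ∉ Set.range f) : deg (G.map f) v = 0 := by
  have : (G.map f).neighborSet v = ∅ := by
    ext t
    simp only [mem_neighborSet, SimpleGraph.map_adj, Set.mem_empty_iff_false, iff_false]
    rintro ⟨w, -, -, rfl, -⟩
    exact hv ⟨w, rfl⟩
  rw [deg, this, Set.ncard_empty]

theorem cubicCount_card_le {V : Type*} [Fintype V] [DecidableEq V] (A : Finset V) :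
    cubicCount #A ≤ #(cubicOn A) := by
  let f : Fin #A ↪ V := A.equivFin.symm.toEmbedding.trans (Function.Embedding.subtype _)
  refine card_le_card_of_injOn (SimpleGraph.map f) ?_ (SimpleGraph.map_injective f).injOn
  intro G hG
  rw [mem_coe, mem_cubicOn] at hG ⊢
  intro v
  split_ifs with hv
  · obtain ⟨w, rfl⟩ : ∃ w, f w = v := ⟨A.equivFin ⟨v, hv⟩, by simp [f]⟩
    simpa [deg_map] using hG w
  · refine deg_map_of_notMem_range f G ?_
    rintro ⟨w, rfl⟩
    simp [f] at hv

theorem mul_cubicCount_le_sum {V : Type*} [Fintype V] [DecidableEq V] {A : Finset V}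
    (hA : 9 ≤ #A) : (#A * (9 * #A + 18 - 54 / (#A - 8)) : ℝ) * cubicCount #A ≤
      ∑ H ∈ cubicOn A, (insertionCount H : ℝ) := by
  refine le_trans ?_ (le_sum_insertionCount hA)
  have hA' : (9 : ℝ) ≤ #A := by exact_mod_cast hA
  have : (54 : ℝ) / (#A - 8) ≤ 54 := div_le_self (by norm_num) (by linarith)
  gcongr
  · exact mul_nonneg (by linarith) (by linarith)
  · exact cubicCount_card_le A

theorem mul_cubicCount_le_cubicCount_add_two {m : ℕ} (hm : 9 ≤ m) :
    ((m + 1) * m * (9 * m + 18 - 54 / (m - 8)) : ℝ) * cubicCount m ≤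
      12 * cubicCount (m + 2) := by
  have hcard {p : Fin (m + 2) × Fin (m + 2)} (hp : p ∈ (univ : Finset _).offDiag) :
      #({p.1, p.2}ᶜ : Finset (Fin (m + 2))) = m := by
    rw [card_compl, card_pair (by simpa using hp), Fintype.card_fin, Nat.add_sub_cancel]
  refine le_of_mul_le_mul_left ?_ (show (0 : ℝ) < m + 2 by positivity)
  calc (m + 2 : ℝ) * ((m + 1) * m * (9 * m + 18 - 54 / (m - 8)) * cubicCount m)
      = ∑ p ∈ (univ : Finset (Fin (m + 2))).offDiag,
          m * (9 * m + 18 - 54 / (m - 8)) * (cubicCount m : ℝ) := by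
        rw [sum_const, offDiag_card, card_univ, Fintype.card_fin, nsmul_eq_mul,
          Nat.cast_sub (Nat.le_mul_self _)]
        push_cast
        ring
    _ ≤ ∑ p ∈ (univ : Finset (Fin (m + 2))).offDiag, ∑ H ∈ cubicOn {p.1, p.2}ᶜ,
          (insertionCount H : ℝ) := sum_le_sum fun p hp => by
        simpa only [hcard hp] using mul_cubicCount_le_sum (hm.trans_eq (hcard hp).symm)
    _ ≤ 12 * (m + 2) * cubicCount (m + 2) := by
        have := sum_insertionCount_le (V := Fin (m + 2))
        rw [cubicOnCompl, sum_sigma, Fintype.card_fin] at this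
        exact_mod_cast this
    _ = (m + 2) * (12 * cubicCount (m + 2)) := by ring

theorem card_isCubic (n : ℕ) :
    Nat.card {G : SimpleGraph (Fin n) // IsCubic G} = cubicCount n := by
  rw [cubicCount, ← Nat.card_eq_finsetCard]
  exact Nat.card_congr (Equiv.subtypeEquivRight fun G => by simp [IsCubicOn, IsCubic, deg])

theorem cubicCount_pos {n : ℕ} {G : SimpleGraph (Fin n)} (hG : IsCubicOn univ G) :
    0 < cubicCount n :=
  card_pos.2 ⟨G, mem_cubicOn.2 hG⟩

theorem isCubicOn_circulantGraph :
    IsCubicOn univ (circulantGraph {1, 11} : SimpleGraph (Fin 22)) := fun v => by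
  rw [if_pos (mem_univ v), deg, Set.ncard_eq_toFinset_card', ← neighborFinset_def]
  decide +revert

/-- The function `(3/2)^h h! (2h)!/(2h)`, which has the order of magnitude of `cubicCount (2 * h)`:
it solves the recursion `mul_cubicCount_le_cubicCount_add_two` without its error term. -/
noncomputable def mainTerm (h : ℕ) : ℝ := (3 / 2) ^ h * h.factorial * ((2 * h).factorial / (2 * h))

theorem mainTerm_pos {h : ℕ} (hh : h ≠ 0) : 0 < mainTerm h := by
  have : (0 : ℝ) < h := by positivity
  unfold mainTerm
  positivity

theorem mainTerm_succ {h : ℕ} (hh : h ≠ 0) :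
    mainTerm (h + 1) = (2 * h + 1) * (2 * h) * (3 / 2 * (h + 1)) * mainTerm h := by
  rw [mainTerm, mainTerm, Nat.factorial_succ h, show 2 * (h + 1) = 2 * h + 1 + 1 by ring,
    Nat.factorial_succ, Nat.factorial_succ]
  push_cast
  field_simp
  ring

theorem mul_cubicCount_two_mul_le {h : ℕ} (hh : 11 ≤ h) :
    ((2 * h + 1) * (2 * h) * (3 / 2 * (h + 1 - 3 / (2 * (h - 4)))) : ℝ) * cubicCount (2 * h) ≤
      cubicCount (2 * (h + 1)) := by
  have h4 : (0 : ℝ) < h - 4 := by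
    have : (11 : ℝ) ≤ h := by exact_mod_cast hh
    linarith
  have hrec := mul_cubicCount_le_cubicCount_add_two (m := 2 * h) (by omega)
  push_cast at hrec
  rw [show (2 * h - 8 : ℝ) = 2 * (h - 4) by ring] at hrec
  rw [mul_add_one]
  refine le_of_mul_le_mul_left (le_of_eq_of_le ?_ hrec) (by norm_num)
  field_simp
  ring

theorem add_one_mul_one_add_le {h : ℝ} (hh : 11 ≤ h) :
    (h + 1) * (1 + 3 / (h + 1)) ≤ (1 + 3 / h) * (h + 1 - 3 / (2 * (h - 4))) := by
  have h4 : 0 < h - 4 := by linarith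
  have : (1 + 3 / h) * (h + 1 - 3 / (2 * (h - 4))) - (h + 1) * (1 + 3 / (h + 1)) =
      3 * (h - 11) / (2 * h * (h - 4)) := by
    field_simp
    ring
  have : 0 ≤ 3 * (h - 11) / (2 * h * (h - 4)) := by
    have : 0 ≤ h - 11 := by linarith
    positivity
  linarith

-- The factor `1 + 3 / h` tends to `1` and its decrease absorbs the error term of the recursion.
theorem mul_cubicCount_le_mul_cubicCount_succ {h : ℕ} (hh : 11 ≤ h) :
    mainTerm (h + 1) * (1 + 3 / (h + 1)) * cubicCount (2 * h) ≤
      mainTerm h * (1 + 3 / h) * cubicCount (2 * (h + 1)) := by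
  have hpos : 0 < mainTerm h := mainTerm_pos (by omega)
  calc mainTerm (h + 1) * (1 + 3 / (h + 1)) * cubicCount (2 * h)
      = mainTerm h * (3 / 2 * (2 * h + 1) * (2 * h)) * ((h + 1) * (1 + 3 / (h + 1))) *
          cubicCount (2 * h) := by
        rw [mainTerm_succ (by omega)]
        ring
    _ ≤ mainTerm h * (3 / 2 * (2 * h + 1) * (2 * h)) *
          ((1 + 3 / h) * (h + 1 - 3 / (2 * (h - 4)))) * cubicCount (2 * h) := by
        have := add_one_mul_one_add_le (h := h) (by exact_mod_cast hh)
        gcongr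
    _ = mainTerm h * (1 + 3 / h) * ((2 * h + 1) * (2 * h) * (3 / 2 * (h + 1 - 3 / (2 * (h - 4)))) *
          cubicCount (2 * h)) := by ring
    _ ≤ mainTerm h * (1 + 3 / h) * cubicCount (2 * (h + 1)) := by
        gcongr
        exact mul_cubicCount_two_mul_le hh

theorem div_le_cubicCount_div {h : ℕ} (hh : 11 ≤ h) :
    cubicCount 22 / (mainTerm 11 * (1 + 3 / (11 : ℕ))) ≤
      cubicCount (2 * h) / (mainTerm h * (1 + 3 / h)) := by
  induction h, hh using Nat.le_induction with
  | base => rfl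
  | succ h hh ih =>
    refine ih.trans ?_
    have : 0 < mainTerm h := mainTerm_pos (by omega)
    have : 0 < mainTerm (h + 1) := mainTerm_pos h.succ_ne_zero
    rw [div_le_div_iff₀ (by positivity) (by positivity), mul_comm, mul_comm (cubicCount _ : ℝ)]
    exact_mod_cast mul_cubicCount_le_mul_cubicCount_succ hh

theorem exists_mul_mainTerm_le_cubicCount :
    ∃ κ > 0, ∀ h, 11 ≤ h → κ * mainTerm h ≤ cubicCount (2 * h) := by
  have hpos {h : ℕ} (hh : 11 ≤ h) : 0 < mainTerm h := mainTerm_pos (by omega)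
  obtain ⟨κ, hκ⟩ : ∃ κ : ℝ, κ = cubicCount 22 / (mainTerm 11 * (1 + 3 / (11 : ℕ))) := ⟨_, rfl⟩
  have hκ0 : 0 < κ := by
    have := hpos le_rfl
    have := cubicCount_pos isCubicOn_circulantGraph
    rw [hκ]
    positivity
  refine ⟨κ, hκ0, fun h hh => ?_⟩
  have := hpos hh
  calc κ * mainTerm h ≤ κ * (mainTerm h * (1 + 3 / h)) := by
        gcongr
        exact le_mul_of_one_le_right this.le (le_add_of_nonneg_right (by positivity))
    _ ≤ cubicCount (2 * h) := by
        rw [← le_div_iff₀ (by positivity), hκ]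
        exact div_le_cubicCount_div hh

/-! ### Counting cycle factors -/

theorem card_iso_mul_card_aut_le {W V : Type*} [Finite W] [Finite V] (T : SimpleGraph W) :
    Nat.card {F : SimpleGraph V // Nonempty (T ≃g F)} * Nat.card (T ≃g T) ≤ Nat.card (W ≃ V) := by
  rw [← Nat.card_prod]
  have e (F : {F : SimpleGraph V // Nonempty (T ≃g F)}) : T ≃g F.1 := F.2.some
  refine Nat.card_le_card_of_injective (fun p => (p.2.trans (e p.1)).toEquiv) ?_
  rintro ⟨F, γ⟩ ⟨F', γ'⟩ h
  have happ (w : W) : e F (γ w) = e F' (γ' w) := DFunLike.congr_fun h w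
  obtain rfl : F = F' := by
    ext u v
    obtain ⟨w, rfl⟩ := (γ.trans (e F)).surjective u
    obtain ⟨z, rfl⟩ := (γ.trans (e F)).surjective v
    calc F.1.Adj (e F (γ w)) (e F (γ z)) ↔ T.Adj w z := (γ.trans (e F)).map_rel_iff
      _ ↔ F'.1.Adj (e F' (γ' w)) (e F' (γ' z)) := (γ'.trans (e F')).map_rel_iff.symm
      _ ↔ F'.1.Adj (e F (γ w)) (e F (γ z)) := by rw [happ, happ]
  exact Prod.ext rfl (RelIso.ext fun w => (e F).injective (happ w))

theorem card_aut_pow_mul_factorial_le {ι W : Type*} [Finite ι] [Finite W] [Nonempty W]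
    (H : SimpleGraph W) :
    Nat.card (H ≃g H) ^ Nat.card ι * (Nat.card ι).factorial ≤
      Nat.card ((⊥ : SimpleGraph ι).boxProd H ≃g (⊥ : SimpleGraph ι).boxProd H) := by
  let f (p : (ι → (H ≃g H)) × Equiv.Perm ι) :
      (⊥ : SimpleGraph ι).boxProd H ≃g (⊥ : SimpleGraph ι).boxProd H :=
    { toEquiv := Equiv.prodShear p.2 fun i => (p.1 i).toEquiv
      map_rel_iff' := by
        rintro ⟨i, w⟩ ⟨j, z⟩
        simp only [Equiv.prodShear_apply, boxProd_adj, bot_adj, false_and, false_or,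
          EmbeddingLike.apply_eq_iff_eq]
        refine and_congr_left ?_
        rintro rfl
        exact (p.1 i).map_adj_iff }
  have := DFunLike.finite ((⊥ : SimpleGraph ι).boxProd H ≃g (⊥ : SimpleGraph ι).boxProd H)
  rw [← Nat.card_fun, ← Nat.card_perm, ← Nat.card_prod]
  refine Nat.card_le_card_of_injective f ?_
  rintro ⟨γ, π⟩ ⟨γ', π'⟩ h
  have happ (i : ι) (w : W) : (π i, γ i w) = (π' i, γ' i w) := DFunLike.congr_fun h (i, w)
  inhabit W
  exact Prod.ext (funext fun i => RelIso.ext fun w => (Prod.ext_iff.1 (happ i w)).2)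
    (Equiv.ext fun i => (Prod.ext_iff.1 (happ i default)).1)

theorem two_mul_le_card_aut_cycleGraph {k : ℕ} (hk : 3 ≤ k) :
    2 * k ≤ Nat.card (cycleGraph k ≃g cycleGraph k) := by
  obtain ⟨n, rfl⟩ := Nat.exists_eq_add_of_le' hk
  let rotation (r : Fin (n + 3)) : cycleGraph (n + 3) ≃g cycleGraph (n + 3) :=
    ⟨Equiv.addLeft r, by simp [cycleGraph_adj]⟩
  let reflection (r : Fin (n + 3)) : cycleGraph (n + 3) ≃g cycleGraph (n + 3) :=
    ⟨Equiv.subLeft r, by simp [cycleGraph_adj, or_comm]⟩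
  have hne (r r' : Fin (n + 3)) : rotation r ≠ reflection r' := by
    intro h
    have h0 : r + 0 = r' - 0 := DFunLike.congr_fun h 0
    have h1 : r + 1 = r' - 1 := DFunLike.congr_fun h 1
    obtain rfl : r = r' := by simpa using h0
    rw [eq_sub_iff_add_eq, add_assoc, add_eq_left] at h1
    exact absurd h1 (ne_of_beq_false rfl)
  have := DFunLike.finite (cycleGraph (n + 3) ≃g cycleGraph (n + 3))
  calc 2 * (n + 3) = Nat.card (Fin (n + 3) ⊕ Fin (n + 3)) := by simp [two_mul]
    _ ≤ _ := Nat.card_le_card_of_injective (Sum.elim rotation reflection) ?_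
  rintro (r | r) (r' | r') h
  · have : r + 0 = r' + 0 := DFunLike.congr_fun h 0
    simpa using this
  · exact (hne r r' h).elim
  · exact (hne r' r h.symm).elim
  · have : r - 0 = r' - 0 := DFunLike.congr_fun h 0
    simpa using this

/-- The graph consisting of `M` disjoint cycles of length `k`, the pattern of a cycle factor. -/
def disjointCycles (M k : ℕ) : SimpleGraph (Fin M × Fin k) :=
  (⊥ : SimpleGraph (Fin M)).boxProd (cycleGraph k)

theorem card_disjointCycles_mul_le {V : Type*} [Finite V] {k : ℕ} (hk : 3 ≤ k) (M : ℕ) :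
    Nat.card {F : SimpleGraph V // Nonempty (disjointCycles M k ≃g F)} *
      ((2 * k) ^ M * M.factorial) ≤ (Nat.card V).factorial := by
  have : NeZero k := ⟨by omega⟩
  have haut : (2 * k) ^ M * M.factorial ≤ Nat.card (disjointCycles M k ≃g disjointCycles M k) := by
    refine le_trans ?_ (card_aut_pow_mul_factorial_le (cycleGraph k))
    rw [Nat.card_fin]
    gcongr
    exact two_mul_le_card_aut_cycleGraph hk
  calc _ ≤ Nat.card (Fin M × Fin k ≃ V) :=
        (Nat.mul_le_mul_left _ haut).trans (card_iso_mul_card_aut_le _)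
    _ ≤ (Nat.card V).factorial := by
        rcases isEmpty_or_nonempty (Fin M × Fin k ≃ V) with h | ⟨⟨e⟩⟩
        · simp
        · rw [Nat.card_congr (Equiv.equivCongr e (Equiv.refl V)), Nat.card_perm]

theorem deg_iso {V W : Type*} {G : SimpleGraph V} {H : SimpleGraph W} (e : G ≃g H) (v : V) :
    deg H (e v) = deg G v :=
  (Nat.card_congr (e.mapNeighborSet v)).symm

theorem deg_disjointCycles {M k : ℕ} (hk : 3 ≤ k) (v : Fin M × Fin k) :
    deg (disjointCycles M k) v = 2 := by
  obtain ⟨m, rfl⟩ := Nat.exists_eq_add_of_le' hk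
  rw [deg, disjointCycles, neighborSet_boxProd, neighborSet_bot, Set.empty_prod, Set.empty_union,
    Set.ncard_prod, Set.ncard_singleton, one_mul, Set.ncard_eq_toFinset_card', ← neighborFinset_def]
  exact cycleGraph_degree_three_le

theorem exists_disjointCycles_iso_le {n k : ℕ} (hk : 3 ≤ k) {G : SimpleGraph (Fin n)}
    (hG : HasCycleFactor G k) : ∃ F ≤ G, Nonempty (disjointCycles (n / k) k ≃g F) := by
  obtain ⟨m, rfl⟩ := Nat.exists_eq_add_of_le' hk
  obtain ⟨f, hf, hadj⟩ := hG
  have hadj' (c : Fin (n / (m + 3))) (i : Fin (m + 3)) : G.Adj (f c i) (f c (i + 1)) := by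
    convert hadj c i
    simp [Fin.val_add]
  let e : Fin (n / (m + 3)) × Fin (m + 3) ≃ Fin n := Equiv.ofBijective _ hf
  refine ⟨(disjointCycles _ _).map e, (SimpleGraph.map_le_iff_le_comap e.toEmbedding _ _).2 ?_,
    ⟨Iso.map e _⟩⟩
  rintro ⟨c, i⟩ ⟨c', j⟩ h
  simp only [disjointCycles, boxProd_adj, bot_adj, false_and, false_or, cycleGraph_adj,
    sub_eq_iff_eq_add'] at h
  obtain ⟨rfl | rfl, rfl⟩ := h
  · exact add_comm j 1 ▸ (hadj' c j).symm
  · exact add_comm i 1 ▸ hadj' c i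

theorem deg_sdiff {V : Type*} [Finite V] {F G : SimpleGraph V} (h : F ≤ G) (v : V) :
    deg (G \ F) v = deg G v - deg F v :=
  Set.ncard_sdiff fun _ hw => h hw

-- Deleting the cycle factor from a cubic graph leaves a perfect matching.
theorem card_hasCycleFactor_le {n k : ℕ} (hk : 3 ≤ k) :
    Nat.card {G : SimpleGraph (Fin n) // IsCubic G ∧ HasCycleFactor G k} ≤
      Nat.card {F : SimpleGraph (Fin n) // Nonempty (disjointCycles (n / k) k ≃g F)} *
        Nat.card {P : SimpleGraph (Fin n) // ∀ v, deg P v = 1} := by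
  rw [← Nat.card_prod]
  choose F hle hF using fun G : {G : SimpleGraph (Fin n) // IsCubic G ∧ HasCycleFactor G k} =>
    exists_disjointCycles_iso_le hk G.2.2
  have hdeg (G) (v : Fin n) : deg (G.1 \ F G) v = 1 := by
    obtain ⟨e⟩ := hF G
    obtain ⟨w, rfl⟩ := e.surjective v
    rw [deg_sdiff (hle G), deg_iso, deg_disjointCycles hk, show deg G.1 (e w) = 3 from G.2.1 _]
  refine Nat.card_le_card_of_injective
    (fun G => (⟨F G, hF G⟩, ⟨G.1 \ F G, hdeg G⟩)) fun G G' h => ?_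
  simp only [Prod.mk.injEq, Subtype.mk.injEq] at h
  apply Subtype.ext
  rw [← sup_sdiff_cancel_right (hle G), ← sup_sdiff_cancel_right (hle G'), h.2, h.1]

theorem exists_involution_of_deg_eq_one {V : Type*} {P : SimpleGraph V} (hP : ∀ v, deg P v = 1) :
    ∃ σ : Equiv.Perm V, σ ^ 2 = 1 ∧ ∀ v w, P.Adj v w ↔ w = σ v := by
  choose s hs using fun v => Set.ncard_eq_one.1 (hP v)
  have hadj (v w : V) : P.Adj v w ↔ w = s v := by
    rw [← mem_neighborSet, hs, Set.mem_singleton_iff]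
  have hinv (v : V) : s (s v) = v := ((hadj _ _).1 ((hadj _ _).2 rfl).symm).symm
  exact ⟨⟨s, s, hinv, hinv⟩, Equiv.ext fun v => hinv v, hadj⟩

theorem cycleType_of_involution {V : Type*} [Fintype V] [DecidableEq V] {h : ℕ}
    (hV : Fintype.card V = 2 * h) {σ : Equiv.Perm V} (hσ : σ ^ 2 = 1) (hfix : ∀ v, σ v ≠ v) :
    σ.cycleType = Multiset.replicate h 2 := by
  have : Fact (Nat.Prime 2) := ⟨Nat.prime_two⟩
  have hrep := Equiv.Perm.cycleType_of_pow_prime_eq_one hσ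
  have hsupp : σ.support = univ := by
    ext v
    simpa using hfix v
  have hsum := σ.sum_cycleType
  rw [hsupp, card_univ, hV, hrep, Multiset.sum_replicate, smul_eq_mul, mul_comm] at hsum
  rwa [Nat.eq_of_mul_eq_mul_left two_pos hsum] at hrep

theorem card_cycleType_replicate_two_mul {V : Type*} [Fintype V] [DecidableEq V] {h : ℕ}
    (hV : Fintype.card V = 2 * h) :
    #{σ : Equiv.Perm V | σ.cycleType = Multiset.replicate h 2} * (2 ^ h * h.factorial) =
      (2 * h).factorial := by
  have hcount : ∏ i ∈ (Multiset.replicate h 2).toFinset,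
      ((Multiset.replicate h 2).count i).factorial = h.factorial := by
    rcases eq_or_ne h 0 with rfl | hh
    · simp
    · simp [Multiset.toFinset_replicate, hh]
  have := Equiv.Perm.card_of_cycleType_mul_eq V (Multiset.replicate h 2)
  rw [hcount, hV, if_pos] at this
  · simpa [mul_comm h 2] using this
  · exact ⟨by simp [mul_comm h 2], fun a ha => (Multiset.eq_of_mem_replicate ha).ge⟩

theorem card_deg_eq_one_mul_le {V : Type*} [Fintype V] {h : ℕ} (hV : Fintype.card V = 2 * h) :
    Nat.card {P : SimpleGraph V // ∀ v, deg P v = 1} * (2 ^ h * h.factorial) ≤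
      (2 * h).factorial := by
  classical
  choose σ hσ hadj using fun P : {P : SimpleGraph V // ∀ v, deg P v = 1} =>
    exists_involution_of_deg_eq_one P.2
  have hinj : Function.Injective σ := fun P Q h => by
    ext v w
    rw [hadj, hadj, h]
  have htype (P) : (σ P).cycleType = Multiset.replicate h 2 :=
    cycleType_of_involution hV (hσ P) fun v hv => P.1.irrefl ((hadj P v v).2 hv.symm)
  rw [← card_cycleType_replicate_two_mul hV, ← Nat.card_eq_finsetCard]
  gcongr
  exact Nat.card_le_card_of_injective (fun P => ⟨σ P, by simpa using htype P⟩)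
    fun P Q h => hinj (Subtype.ext_iff.1 h)

theorem card_hasCycleFactor_mul_le {h k : ℕ} (hk : 3 ≤ k) :
    Nat.card {G : SimpleGraph (Fin (2 * h)) // IsCubic G ∧ HasCycleFactor G k} *
      ((2 * k) ^ (2 * h / k) * (2 * h / k).factorial) * (2 ^ h * h.factorial) ≤
      (2 * h).factorial * (2 * h).factorial := by
  have hfactor := card_disjointCycles_mul_le (V := Fin (2 * h)) hk (2 * h / k)
  rw [Nat.card_fin] at hfactor
  have hmatching := card_deg_eq_one_mul_le (Fintype.card_fin (2 * h))
  calc _ ≤ _ := Nat.mul_le_mul_right _ (Nat.mul_le_mul_right _ (card_hasCycleFactor_le hk))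
    _ = _ := by ring
    _ ≤ _ := Nat.mul_le_mul hfactor hmatching

/-! ### Asymptotics -/

theorem two_mul_add_one_mul_centralBinom_sq_le (h : ℕ) :
    (2 * h + 1) * h.centralBinom ^ 2 ≤ 16 ^ h := by
  induction h with
  | zero => simp
  | succ h ih =>
    refine Nat.le_of_mul_le_mul_left ?_ (show 0 < (h + 1) ^ 2 by positivity)
    calc (h + 1) ^ 2 * ((2 * (h + 1) + 1) * (h + 1).centralBinom ^ 2)
        = (2 * h + 3) * ((h + 1) * (h + 1).centralBinom) ^ 2 := by ring
      _ = 4 * ((2 * h + 3) * (2 * h + 1)) * ((2 * h + 1) * h.centralBinom ^ 2) := by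
          rw [Nat.succ_mul_centralBinom_succ]
          ring
      _ ≤ 4 * (4 * (h + 1) ^ 2) * 16 ^ h :=
          Nat.mul_le_mul (Nat.mul_le_mul_left 4 (by nlinarith)) ih
      _ = (h + 1) ^ 2 * 16 ^ (h + 1) := by ring

theorem sqrt_two_mul_mul_centralBinom_le (h : ℕ) : √(2 * h) * h.centralBinom ≤ 4 ^ h := by
  refine le_of_sq_le_sq ?_ (by positivity)
  calc (√(2 * h) * h.centralBinom) ^ 2 = 2 * h * (h.centralBinom : ℝ) ^ 2 := by
        rw [mul_pow, Real.sq_sqrt (by positivity)]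
    _ ≤ (2 * h + 1) * (h.centralBinom : ℝ) ^ 2 := by
        gcongr
        linarith
    _ ≤ 16 ^ h := by exact_mod_cast two_mul_add_one_mul_centralBinom_sq_le h
    _ = (4 ^ h) ^ 2 := by
        rw [← pow_mul, mul_comm, pow_mul]
        norm_num

theorem sqrt_mul_pow_le_factorial (M : ℕ) : √M * (M / Real.exp 1) ^ M ≤ M.factorial := by
  refine le_trans ?_ (Stirling.le_factorial_stirling M)
  gcongr
  exact le_mul_of_one_le_left M.cast_nonneg (by linarith [Real.pi_gt_three])

/-- Up to a constant, a bound for the proportion of cubic graphs on `2 * h` vertices with a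
`k`-cycle factor of `M` cycles. -/
noncomputable def ratioBound (h k M : ℕ) : ℝ :=
  √k * (4 / 3) ^ h * (Real.exp 1 / (2 * (2 * h))) ^ M

theorem centralBinom_mul_le {h k M : ℕ} (hh : h ≠ 0) (hM : M * k = 2 * h) :
    h.centralBinom * (2 * h) ≤ ratioBound h k M * 3 ^ h * ((2 * k) ^ M * M.factorial) := by
  have hMk : (M * k : ℝ) = 2 * h := by exact_mod_cast hM
  have hcancel : Real.exp 1 / (2 * (2 * h)) * (2 * k * (M / Real.exp 1)) = 1 := by
    rw [← hMk]
    have : (M * k : ℝ) ≠ 0 := by rw [hMk]; positivity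
    have := left_ne_zero_of_mul this
    have := right_ne_zero_of_mul ‹(M * k : ℝ) ≠ 0›
    field_simp
  calc (h.centralBinom * (2 * h) : ℝ) = √(2 * h) * (√(2 * h) * h.centralBinom) := by
        rw [← mul_assoc √(2 * h), Real.mul_self_sqrt (by positivity), mul_comm]
    _ ≤ √(2 * h) * 4 ^ h := by
        gcongr
        exact sqrt_two_mul_mul_centralBinom_le h
    _ = √(M * k) * (4 / 3 * 3) ^ h *
          (Real.exp 1 / (2 * (2 * h)) * (2 * k * (M / Real.exp 1))) ^ M := by
        rw [hcancel, hMk]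
        norm_num
    _ = ratioBound h k M * 3 ^ h * ((2 * k) ^ M * (√M * (M / Real.exp 1) ^ M)) := by
        rw [Real.sqrt_mul (by positivity), mul_pow, mul_pow, mul_pow, ratioBound]
        ring
    _ ≤ ratioBound h k M * 3 ^ h * ((2 * k) ^ M * M.factorial) := by
        have : 0 ≤ ratioBound h k M := by unfold ratioBound; positivity
        gcongr
        exact sqrt_mul_pow_le_factorial M

theorem factorial_sq_le {h k M : ℕ} (hh : h ≠ 0) (hM : M * k = 2 * h) :
    ((2 * h).factorial * (2 * h).factorial : ℝ) ≤
      ratioBound h k M * mainTerm h * ((2 * k) ^ M * M.factorial) * (2 ^ h * h.factorial) := by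
  have hcb : ((2 * h).factorial : ℝ) = h.centralBinom * h.factorial * h.factorial := by
    have := Nat.choose_mul_factorial_mul_factorial (Nat.le_mul_of_pos_left h two_pos)
    rw [← Nat.centralBinom_eq_two_mul_choose, two_mul, Nat.add_sub_cancel, ← two_mul] at this
    exact_mod_cast this.symm
  calc ((2 * h).factorial * (2 * h).factorial : ℝ)
      = h.centralBinom * (2 * h) *
          (h.factorial * h.factorial * ((2 * h).factorial / (2 * h))) := by
        nth_rw 1 [hcb]
        field_simp
    _ ≤ ratioBound h k M * 3 ^ h * ((2 * k) ^ M * M.factorial) *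
          (h.factorial * h.factorial * ((2 * h).factorial / (2 * h))) :=
        mul_le_mul_of_nonneg_right (centralBinom_mul_le hh hM) (by positivity)
    _ = ratioBound h k M * (3 / 2 * 2) ^ h * ((2 * k) ^ M * M.factorial) *
          (h.factorial * h.factorial * ((2 * h).factorial / (2 * h))) := by norm_num
    _ = _ := by
        rw [mul_pow, mainTerm]
        ring

theorem card_hasCycleFactor_le_ratioBound_mul {h k : ℕ} (hh : h ≠ 0) (hk : 3 ≤ k)
    (hdvd : k ∣ 2 * h) :
    (Nat.card {G : SimpleGraph (Fin (2 * h)) // IsCubic G ∧ HasCycleFactor G k} : ℝ) ≤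
      ratioBound h k (2 * h / k) * mainTerm h := by
  refine le_of_mul_le_mul_right ?_
    (show (0 : ℝ) < (2 * k) ^ (2 * h / k) * (2 * h / k).factorial by positivity)
  refine le_of_mul_le_mul_right ?_ (show (0 : ℝ) < 2 ^ h * h.factorial by positivity)
  refine le_trans ?_ (factorial_sq_le hh (Nat.div_mul_cancel hdvd))
  exact_mod_cast card_hasCycleFactor_mul_le hk

theorem exists_ratio_le_mul_ratioBound :
    ∃ C : ℝ, 0 ≤ C ∧ ∀ h k, 11 ≤ h → 3 ≤ k → k ∣ 2 * h →
      (Nat.card {G : SimpleGraph (Fin (2 * h)) // IsCubic G ∧ HasCycleFactor G k} : ℝ) /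
        Nat.card {G : SimpleGraph (Fin (2 * h)) // IsCubic G} ≤ C * ratioBound h k (2 * h / k) := by
  obtain ⟨κ, hκ, hlow⟩ := exists_mul_mainTerm_le_cubicCount
  refine ⟨κ⁻¹, by positivity, fun h k hh hk hdvd => ?_⟩
  have hmain : 0 < mainTerm h := mainTerm_pos (by omega)
  have hcubic : 0 < (cubicCount (2 * h) : ℝ) := (mul_pos hκ hmain).trans_le (hlow h hh)
  rw [card_isCubic, div_le_iff₀ hcubic]
  have hratio : 0 ≤ ratioBound h k (2 * h / k) := by unfold ratioBound; positivity
  calc _ ≤ ratioBound h k (2 * h / k) * mainTerm h :=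
        card_hasCycleFactor_le_ratioBound_mul (by omega) hk hdvd
    _ = κ⁻¹ * ratioBound h k (2 * h / k) * (κ * mainTerm h) := by field_simp
    _ ≤ _ := by
        gcongr
        exact hlow h hh

/-- The exponential growth rate of `(4 / 3) ^ (n / 2)`, through which `K0 n` is
`log (2 * n / e) / rate`. -/
noncomputable def rate : ℝ := Real.log 2 - Real.log 3 / 2

theorem rate_pos : 0 < rate := by
  have : Real.log 3 < Real.log (2 ^ 2) := Real.log_lt_log (by norm_num) (by norm_num)
  rw [Real.log_pow] at this
  unfold rate
  push_cast at this
  linarith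

theorem exp_two_mul_rate : Real.exp (2 * rate) = 4 / 3 := by
  rw [rate, mul_sub, mul_div_cancel₀ _ two_ne_zero, Real.exp_sub, Real.exp_log three_pos, two_mul,
    Real.exp_add, Real.exp_log two_pos]
  norm_num

theorem K0_mul_rate (n : ℕ) : K0 n * rate = Real.log (2 * n / Real.exp 1) := by
  have : 0 < Real.log 2 := Real.log_pos one_lt_two
  have hden : 1 - Real.logb 2 3 / 2 = rate / Real.log 2 := by
    rw [Real.logb, rate]
    field_simp
  have := rate_pos
  rw [K0, hden, Real.logb]
  field_simp

theorem ratioBound_eq {h k M : ℕ} (hh : h ≠ 0) (hM : M * k = 2 * h) :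
    ratioBound h k M = √k * Real.exp (-(M * (rate * (K0 (2 * h) - k)))) := by
  have hMk : (M * k : ℝ) = 2 * h := by exact_mod_cast hM
  have hbase : Real.exp (-Real.log (2 * (2 * h) / Real.exp 1)) =
      Real.exp 1 / (2 * (2 * h)) := by
    rw [Real.exp_neg, Real.exp_log (by positivity), inv_div]
  have hexp : -(M * (rate * (K0 (2 * h) - k))) =
      h * (2 * rate) + M * -Real.log (2 * (2 * h) / Real.exp 1) := by
    have hK := K0_mul_rate (2 * h)
    push_cast at hK
    linear_combination (-M : ℝ) * hK + rate * hMk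
  rw [hexp, Real.exp_add, Real.exp_nat_mul, Real.exp_nat_mul, exp_two_mul_rate, hbase, ← mul_assoc,
    ratioBound]

theorem mul_rate_le_log {n k : ℕ} (hn : n ≠ 0) (hk : k ≤ K0 n) : k * rate ≤ Real.log n := by
  have hlog2 : Real.log 2 < 1 := by linarith [Real.log_two_lt_d9]
  calc k * rate ≤ K0 n * rate := by
        gcongr
        exact rate_pos.le
    _ = Real.log 2 + Real.log n - 1 := by
        rw [K0_mul_rate, Real.log_div (by positivity) (by positivity),
          Real.log_mul (by positivity) (by positivity), Real.log_exp]
    _ ≤ Real.log n := by linarith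

theorem ratioBound_le {h k M : ℕ} {c : ℝ} (hh : h ≠ 0) (hM : M * k = 2 * h) (hc : 0 ≤ c)
    (hk : k ≤ K0 (2 * h) - c * Real.log (2 * h : ℕ) ^ 2 / (2 * h : ℕ)) :
    ratioBound h k M ≤ √(rate⁻¹ * Real.log (2 * h : ℕ)) *
      Real.exp (-(c * rate ^ 2) * Real.log (2 * h : ℕ)) := by
  have hrate := rate_pos
  set L := Real.log (2 * h : ℕ)
  have hMk : (M * k : ℝ) = (2 * h : ℕ) := by exact_mod_cast hM
  have hk0 : (k : ℝ) ≠ 0 := by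
    rintro h0
    rw [h0, mul_zero] at hMk
    exact hh (by simpa using hMk.symm)
  have hM0 : (M : ℝ) ≠ 0 := by
    rintro h0
    rw [h0, zero_mul] at hMk
    exact hh (by simpa using hMk.symm)
  have hgap : c * L ^ 2 / (2 * h : ℕ) ≤ K0 (2 * h) - k := by linarith
  have hkL : k * rate ≤ L :=
    mul_rate_le_log (by omega) (sub_nonneg.1 (le_trans (by positivity) hgap))
  have : 0 ≤ L := Real.log_natCast_nonneg _
  rw [ratioBound_eq hh hM, neg_mul]
  refine mul_le_mul (Real.sqrt_le_sqrt ?_) (Real.exp_le_exp.2 (neg_le_neg ?_)) (by positivity)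
    (by positivity)
  · rwa [le_inv_mul_iff₀ hrate, mul_comm]
  · calc c * rate ^ 2 * L = c * rate * L / k * (k * rate) := by field_simp
      _ ≤ c * rate * L / k * L := by gcongr
      _ = M * (rate * (c * L ^ 2 / (2 * h : ℕ))) := by
          rw [← hMk]
          field_simp
      _ ≤ M * (rate * (K0 (2 * h) - k)) := by gcongr

theorem tendsto_sqrt_log_mul_exp_neg_mul_log (a : ℝ) {b : ℝ} (hb : 0 < b) :
    Filter.Tendsto (fun n : ℕ => √(a * Real.log n) * Real.exp (-b * Real.log n))
      Filter.atTop (nhds 0) := by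
  have hexp : Filter.Tendsto (fun x : ℝ => √a * (x ^ (1 / 2 : ℝ) * Real.exp (-b * x)))
      Filter.atTop (nhds 0) := by
    simpa using (tendsto_rpow_mul_exp_neg_mul_atTop_nhds_zero (1 / 2) b hb).const_mul √a
  refine (hexp.comp (Real.tendsto_log_atTop.comp tendsto_natCast_atTop_atTop)).congr fun n => ?_
  simp only [Function.comp_apply]
  rw [Real.sqrt_mul' a (Real.log_natCast_nonneg n), Real.sqrt_eq_rpow (Real.log n), mul_assoc]

theorem exists_ratio_le_mul_sqrt_log_mul_exp :
    ∃ C : ℝ, 0 ≤ C ∧ ∀ (n k : ℕ) (c : ℝ), 22 ≤ n → Even n → 3 ≤ k → k ∣ n → 0 ≤ c →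
      k ≤ K0 n - c * Real.log n ^ 2 / n →
      (Nat.card {G : SimpleGraph (Fin n) // IsCubic G ∧ HasCycleFactor G k} : ℝ) /
        Nat.card {G : SimpleGraph (Fin n) // IsCubic G} ≤
      C * (√(rate⁻¹ * Real.log n) * Real.exp (-(c * rate ^ 2) * Real.log n)) := by
  obtain ⟨C, hC, hratio⟩ := exists_ratio_le_mul_ratioBound
  refine ⟨C, hC, fun n k c hn heven hk hdvd hc hK => ?_⟩
  obtain ⟨h, rfl⟩ := heven.two_dvd
  refine (hratio h k (by omega) hk hdvd).trans ?_
  gcongr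
  exact ratioBound_le (by omega) (Nat.div_mul_cancel hdvd) hc hK

end CycleFactor

theorem stmt1_general {ι : Type*} {l : Filter ι} {N k : ι → ℕ} {c : ℝ} (hc : 0 < c)
    (hNeven : ∀ᶠ i in l, Even (N i)) (hN : Filter.Tendsto N l Filter.atTop)
    (hdvd : ∀ᶠ i in l, k i ∣ N i) (hk3 : ∀ᶠ i in l, 3 ≤ k i)
    (hK : ∀ᶠ i in l, (k i : ℝ) ≤ K0 (N i) - c * Real.log (N i) ^ 2 / N i) :
    Filter.Tendsto (fun i =>
      (Nat.card {G : SimpleGraph (Fin (N i)) // IsCubic G ∧ HasCycleFactor G (k i)} : ℝ) /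
        (Nat.card {G : SimpleGraph (Fin (N i)) // IsCubic G} : ℝ))
      l (nhds 0) := by
  obtain ⟨C, -, hratio⟩ := CycleFactor.exists_ratio_le_mul_sqrt_log_mul_exp
  have hb : 0 < c * CycleFactor.rate ^ 2 := mul_pos hc (pow_pos CycleFactor.rate_pos 2)
  have hlim :=
    ((CycleFactor.tendsto_sqrt_log_mul_exp_neg_mul_log CycleFactor.rate⁻¹ hb).comp hN).const_mul C
  rw [mul_zero] at hlim
  refine squeeze_zero' (.of_forall fun i => by positivity) ?_ hlim
  filter_upwards [hN.eventually_ge_atTop 22, hNeven, hdvd, hk3, hK] with i hi heven hd h3 hKi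
  exact hratio (N i) (k i) c hi heven h3 hd hc.le hKi

/-- If `n` ranges over even positive integers tending to infinity and `k(n)` is a divisor
of `n` with `3 ≤ k(n) ≤ K₀(n) − (log n)²/n`, then the proportion of 3-regular simple graphs
on `{1,…,n}` containing a `k(n)`-cycle factor tends to `0`. -/
theorem stmt1 (N k : ℕ → ℕ)
    (hNeven : ∀ i, Even (N i)) (hNpos : ∀ i, 0 < N i)
    (hN : Filter.Tendsto N Filter.atTop Filter.atTop)
    (hdvd : ∀ i, k i ∣ N i) (hk3 : ∀ i, 3 ≤ k i)
    (hK : ∀ i, (k i : ℝ) ≤ K0 (N i) - (Real.log (N i)) ^ 2 / N i) :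
    Filter.Tendsto (fun i =>
      (Nat.card {G : SimpleGraph (Fin (N i)) // IsCubic G ∧ HasCycleFactor G (k i)} : ℝ) /
        (Nat.card {G : SimpleGraph (Fin (N i)) // IsCubic G} : ℝ))
      Filter.atTop (nhds 0) := by
  exact stmt1_general one_pos (.of_forall hNeven) hN (.of_forall hdvd) (.of_forall hk3)
    (.of_forall fun i => by simpa using hK i)
end

section
/- Let I_{0,m} denote the set of simple graphs on {1,…,n} having exactly m connected components, each a path on at least 2 vertices, and let S be chosen uniformly at random from I_{0,m}. Let t, ℓ be integers with 1 ≤ t ≤ m−1, ℓ ≥ 2, 2m ≤ n and t(ℓ−2) ≤ n−m−1. Then the probability that at least t components of S have at least ℓ vertices is at most (1 + t/(m−t)) · (1/t!) · (m−1)_t · (n−2m)_{t(ℓ−2)} / (n−m−1)_{t(ℓ−2)}, where (x)_j = x(x−1)⋯(x−j+1) denotes the falling factorial. -/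
/-- The connected component `c` of `G` is a path on at least 2 vertices. -/
def IsPathComponent {V : Type*} (G : SimpleGraph V) (c : G.ConnectedComponent) : Prop :=
  ∃ (ℓ : ℕ) (v : Fin ℓ → V), 2 ≤ ℓ ∧ Function.Injective v ∧ Set.range v = c.supp ∧
    ∀ a b : Fin ℓ, G.Adj (v a) (v b) ↔ ((a : ℕ) + 1 = b ∨ (b : ℕ) + 1 = a)

/-- `G` has exactly `m` connected components, each of which is a path on at least 2
vertices (i.e. `G ∈ I_{0,m}`). -/
def PathsGraph {n : ℕ} (G : SimpleGraph (Fin n)) (m : ℕ) : Prop :=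
  Nat.card G.ConnectedComponent = m ∧ ∀ c : G.ConnectedComponent, IsPathComponent G c

/-!
Up to isomorphism a member of `I_{0,m}` is a disjoint union of paths on `g i + 2` vertices,
`i < m`, with `∑ i, g i = n - 2 * m`. Count the isomorphisms from such a union to a graph on
`Fin n` in two ways: a fixed `g` admits `n!` of them, one for each bijection of the vertex sets,
and a fixed graph admits `m! * 2 ^ m`, since one enumerates its components and orients each.
Hence a uniform member of `I_{0,m}` has the component sizes of a uniform composition `g`.
Requiring `ℓ - 2 ≤ g i` for all `i` in a given `t`-set subtracts `t * (ℓ - 2)` from the total,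
so by stars and bars it has probability `(n - 2m)_{t(ℓ-2)} / (n - m - 1)_{t(ℓ-2)}`. A union bound
over the `t`-sets gives a factor `m.choose t`, which is `(1 + t / (m - t)) * (m - 1)_t / t!`.
-/

theorem one_add_div_mul_descFactorial {t m : ℕ} (htm : t < m) :
    (1 + (t : ℝ) / ((m : ℝ) - t)) * (1 / (t.factorial : ℝ)) * ((m - 1).descFactorial t : ℝ) =
      m.choose t := by
  obtain ⟨k, rfl⟩ := Nat.exists_eq_add_of_lt htm
  have hdesc : ((k : ℝ) + 1) * ((t + k + 1).descFactorial t : ℝ) =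
      (t + k + 1) * (t + k).descFactorial t := by
    have := Nat.succ_descFactorial (t + k) t
    rw [show t + k + 1 - t = k + 1 by omega] at this
    exact_mod_cast this
  rw [Nat.descFactorial_eq_factorial_mul_choose (t + k + 1)] at hdesc
  push_cast at hdesc ⊢
  rw [show (t : ℝ) + k + 1 - t = k + 1 by ring]
  field_simp
  linear_combination -hdesc

theorem multichoose_sub_mul_descFactorial {k s : ℕ} (hk : k ≤ s) (m : ℕ) :
    m.multichoose (s - k) * (m + s - 1).descFactorial k =
      m.multichoose s * s.descFactorial k := by
  have hchoose := Nat.choose_mul (n := m + s - 1) hk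
  have hsub : m + (s - k) - 1 = m + s - 1 - k := by omega
  rw [Nat.multichoose_eq, Nat.multichoose_eq, hsub, Nat.descFactorial_eq_factorial_mul_choose,
    Nat.descFactorial_eq_factorial_mul_choose]
  calc
    (m + s - 1 - k).choose (s - k) * (k.factorial * (m + s - 1).choose k) =
        k.factorial * ((m + s - 1).choose k * (m + s - 1 - k).choose (s - k)) := by ring
    _ = (m + s - 1).choose s * (k.factorial * s.choose k) := by rw [← hchoose, mul_left_comm]

section Compositions

open Finset

variable {ι : Type*} [DecidableEq ι]

theorem card_piAntidiag_eq_multichoose (s : Finset ι) (n : ℕ) :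
    #(piAntidiag s n) = (#s).multichoose n := by
  rw [← card_finsuppAntidiag_nat_eq_multichoose, finsuppAntidiag]
  simp

variable [Fintype ι]

theorem card_piAntidiag_filter_le (d : ι → ℕ) {s : ℕ} (hd : ∑ i, d i ≤ s) :
    #{f ∈ piAntidiag univ s | ∀ i, d i ≤ f i} = (Fintype.card ι).multichoose (s - ∑ i, d i) := by
  have hshift : (piAntidiag univ (s - ∑ i, d i)).map (addRightEmbedding d) =
      {f ∈ piAntidiag (univ : Finset ι) s | ∀ i, d i ≤ f i} := by
    ext f
    simp only [mem_map, mem_filter, mem_piAntidiag, mem_univ, implies_true, and_true,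
      addRightEmbedding_apply]
    constructor
    · rintro ⟨g, hg, rfl⟩
      refine ⟨?_, fun i ↦ le_add_self⟩
      simp only [Pi.add_apply, sum_add_distrib, hg, tsub_add_cancel_of_le hd]
    · rintro ⟨rfl, hdf⟩
      exact ⟨f - d, sum_tsub_distrib univ fun i _ ↦ hdf i,
        funext fun i ↦ tsub_add_cancel_of_le (hdf i)⟩
  rw [← hshift, card_map, card_piAntidiag_eq_multichoose, card_univ]

theorem card_piAntidiag_filter_le_mul_descFactorial (d : ι → ℕ) (s : ℕ) :
    #{f ∈ piAntidiag univ s | ∀ i, d i ≤ f i} * (Fintype.card ι + s - 1).descFactorial (∑ i, d i) =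
      #(piAntidiag (univ : Finset ι) s) * s.descFactorial (∑ i, d i) := by
  rcases le_or_gt (∑ i, d i) s with hd | hd
  · rw [card_piAntidiag_filter_le d hd, card_piAntidiag_eq_multichoose, card_univ,
      multichoose_sub_mul_descFactorial hd]
  · have hempty : {f ∈ piAntidiag (univ : Finset ι) s | ∀ i, d i ≤ f i} = ∅ := by
      refine filter_eq_empty_iff.2 fun f hf hdf ↦ hd.not_ge ?_
      rw [← (mem_piAntidiag.1 hf).1]
      exact sum_le_sum fun i _ ↦ hdf i
    rw [hempty, Nat.descFactorial_of_lt hd, card_empty, zero_mul, mul_zero]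

theorem card_piAntidiag_filter_forall_mem_mul_descFactorial (T : Finset ι)
    (r s : ℕ) :
    #{f ∈ piAntidiag univ s | ∀ i ∈ T, r ≤ f i} *
        (Fintype.card ι + s - 1).descFactorial (#T * r) =
      #(piAntidiag (univ : Finset ι) s) * s.descFactorial (#T * r) := by
  have hsum : ∑ i, (if i ∈ T then r else 0) = #T * r := by simp
  have hle (f : ι → ℕ) : (∀ i, (if i ∈ T then r else 0) ≤ f i) ↔ ∀ i ∈ T, r ≤ f i :=
    forall_congr' fun i ↦ by split_ifs with hi <;> simp [hi]
  simpa only [hsum, hle] using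
    card_piAntidiag_filter_le_mul_descFactorial (fun i ↦ if i ∈ T then r else 0) s

theorem filter_le_card_filter_subset_biUnion (F : Finset (ι → ℕ)) (t r : ℕ) :
    {f ∈ F | t ≤ #{i | r ≤ f i}} ⊆
      (powersetCard t univ).biUnion fun T ↦ {f ∈ F | ∀ i ∈ T, r ≤ f i} := by
  intro f hf
  obtain ⟨hfF, ht⟩ := mem_filter.1 hf
  obtain ⟨T, hT, hcard⟩ := exists_subset_card_eq ht
  exact mem_biUnion.2 ⟨T, mem_powersetCard.2 ⟨subset_univ T, hcard⟩,
    mem_filter.2 ⟨hfF, fun i hi ↦ (mem_filter.1 (hT hi)).2⟩⟩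

theorem card_piAntidiag_filter_le_card_mul_descFactorial_le (t r s : ℕ) :
    #{f ∈ piAntidiag (univ : Finset ι) s | t ≤ #{i | r ≤ f i}} *
        (Fintype.card ι + s - 1).descFactorial (t * r) ≤
      (Fintype.card ι).choose t *
        (#(piAntidiag (univ : Finset ι) s) * s.descFactorial (t * r)) :=
  calc
    _ ≤ (∑ T ∈ powersetCard t univ, #{f ∈ piAntidiag (univ : Finset ι) s | ∀ i ∈ T, r ≤ f i}) *
          (Fintype.card ι + s - 1).descFactorial (t * r) :=
      Nat.mul_le_mul_right _
        ((card_le_card (filter_le_card_filter_subset_biUnion _ t r)).trans card_biUnion_le)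
    _ = ∑ _ ∈ powersetCard t (univ : Finset ι),
          #(piAntidiag (univ : Finset ι) s) * s.descFactorial (t * r) := by
      rw [sum_mul]
      refine sum_congr rfl fun T hT ↦ ?_
      simpa only [(mem_powersetCard.1 hT).2] using
        card_piAntidiag_filter_forall_mem_mul_descFactorial T r s
    _ = _ := by rw [sum_const, card_powersetCard, card_univ, smul_eq_mul]

end Compositions

section PathGraph

open SimpleGraph

/-- The reversal of the path on `n` vertices, its only nontrivial automorphism when `2 ≤ n`. It
accounts for the two orientations of each component. -/
def pathGraphRev (n : ℕ) : pathGraph n ≃g pathGraph n where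
  toEquiv := Fin.revPerm
  map_rel_iff' {a b} := by
    simp only [pathGraph_adj, Fin.revPerm_apply, Fin.val_rev]
    omega

theorem pathGraphRev_ne_refl (n : ℕ) : pathGraphRev (n + 2) ≠ Iso.refl := fun h ↦
  Fin.last_pos.ne' ((Fin.rev_zero (n + 1)).symm.trans (DFunLike.congr_fun h 0))

theorem pathGraph_iso_eq_refl_of_apply_zero {n : ℕ} {φ : pathGraph (n + 1) ≃g pathGraph (n + 1)}
    (h0 : φ 0 = 0) : φ = Iso.refl := by
  have hval : ∀ k (hk : k < n + 1), (φ ⟨k, hk⟩ : ℕ) = k := by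
    intro k
    induction k using Nat.strong_induction_on with
    | _ k ih =>
      intro hk
      rcases k with _ | k
      · exact congrArg Fin.val h0
      have hprev : (φ ⟨k, by omega⟩ : ℕ) = k := ih k (by omega) _
      have hadj : (pathGraph (n + 1)).Adj (φ ⟨k, by omega⟩) (φ ⟨k + 1, hk⟩) :=
        φ.map_adj_iff.2 (pathGraph_adj.2 (Or.inl rfl))
      rcases pathGraph_adj.1 hadj with hup | hdown
      · omega
      · have hback : φ ⟨k + 1, hk⟩ = φ ⟨k - 1, by omega⟩ :=
          Fin.ext (by rw [ih (k - 1) (by omega)]; omega)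
        have := congrArg Fin.val (φ.injective hback)
        simp only at this
        omega
  exact DFunLike.ext φ Iso.refl fun a ↦ Fin.ext (hval a a.2)

theorem pathGraph_iso_apply_zero_eq {n : ℕ} (φ : pathGraph (n + 1) ≃g pathGraph (n + 1)) :
    φ 0 = 0 ∨ φ 0 = Fin.last n := by
  -- The vertex `0` has a single neighbour, whereas an interior vertex has two.
  by_contra! h
  have hpos : 0 < (φ 0 : ℕ) := Fin.pos_iff_ne_zero.2 h.1
  have hlt : (φ 0 : ℕ) < n := Fin.lt_last_iff_ne_last.2 h.2
  have hnbr (b : Fin (n + 1)) (hb : (pathGraph (n + 1)).Adj (φ 0) b) : (φ.symm b : ℕ) = 1 := by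
    rw [← φ.apply_symm_apply b, φ.map_adj_iff, pathGraph_adj] at hb
    simpa [eq_comm] using hb
  have hl := hnbr ⟨φ 0 - 1, by omega⟩ (pathGraph_adj.2 (Or.inr (by simp only; omega)))
  have hr := hnbr ⟨φ 0 + 1, by omega⟩ (pathGraph_adj.2 (Or.inl rfl))
  have := congrArg Fin.val (φ.symm.injective (Fin.ext (hl.trans hr.symm)))
  simp only at this
  omega

theorem pathGraph_iso_eq_refl_or_rev {n : ℕ} (φ : pathGraph (n + 1) ≃g pathGraph (n + 1)) :
    φ = Iso.refl ∨ φ = pathGraphRev (n + 1) := by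
  refine (pathGraph_iso_apply_zero_eq φ).imp pathGraph_iso_eq_refl_of_apply_zero fun hlast ↦ ?_
  have hrev : φ.trans (pathGraphRev (n + 1)) = Iso.refl :=
    pathGraph_iso_eq_refl_of_apply_zero
      ((congrArg (pathGraphRev (n + 1)) hlast).trans (Fin.rev_last n))
  exact DFunLike.ext _ _ fun a ↦ Fin.rev_eq_iff.1 (DFunLike.congr_fun hrev a)

theorem nonempty_sigma_pathGraph_iso_equiv_bool {W : Type*} {H : SimpleGraph W} {k : ℕ}
    (φ : pathGraph (k + 2) ≃g H) : Nonempty ((Σ j, pathGraph (j + 2) ≃g H) ≃ Bool) := by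
  let orient (b : Bool) : Σ j, pathGraph (j + 2) ≃g H :=
    ⟨k, bif b then φ else (pathGraphRev (k + 2)).trans φ⟩
  have hne : φ ≠ (pathGraphRev (k + 2)).trans φ := fun h ↦ pathGraphRev_ne_refl k <|
    DFunLike.ext _ _ fun a ↦ (φ.injective (DFunLike.congr_fun h a)).symm
  refine ⟨(Equiv.ofBijective orient ⟨?_, ?_⟩).symm⟩
  · rw [Bool.injective_iff]
    simpa [orient] using hne.symm
  · rintro ⟨j, ψ⟩
    obtain rfl : j = k := by
      simpa using Fintype.card_congr (ψ.toEquiv.trans φ.toEquiv.symm)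
    have hψ : ψ = (ψ.trans φ.symm).trans φ := DFunLike.ext _ _ fun a ↦ by simp
    rcases pathGraph_iso_eq_refl_or_rev (ψ.trans φ.symm) with h | h
    · exact ⟨true, Sigma.ext rfl (heq_of_eq (by rw [hψ, h]; rfl))⟩
    · exact ⟨false, Sigma.ext rfl (heq_of_eq (by rw [hψ, h]; rfl))⟩

theorem isPathComponent_iff_nonempty_iso {V : Type*} {G : SimpleGraph V}
    {c : G.ConnectedComponent} :
    IsPathComponent G c ↔ ∃ k, Nonempty (pathGraph (k + 2) ≃g c.toSimpleGraph) := by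
  constructor
  · rintro ⟨ℓ, v, hℓ, hinj, hrange, hadj⟩
    obtain ⟨k, rfl⟩ := Nat.exists_eq_add_of_le' hℓ
    let e : Fin (k + 2) ≃ c := (Equiv.ofInjective v hinj).trans (Equiv.setCongr hrange)
    exact ⟨k, ⟨e, fun {a b} ↦ (hadj a b).trans pathGraph_adj.symm⟩⟩
  · rintro ⟨k, ⟨φ⟩⟩
    refine ⟨k + 2, fun a ↦ φ a, by omega, Subtype.val_injective.comp φ.injective, ?_, fun a b ↦ ?_⟩
    · exact (φ.surjective.range_comp Subtype.val).trans Subtype.range_val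
    · exact (φ.map_adj_iff (v := a) (w := b)).trans pathGraph_adj

end PathGraph

section SigmaGraph

open SimpleGraph

/-- The disjoint union of a family of graphs, which splits a graph into its components. The
transport `h ▸ x.2` compares points of summands whose indices are only propositionally equal. -/
def sigmaGraph {ι : Type*} {W : ι → Type*} (H : ∀ i, SimpleGraph (W i)) :
    SimpleGraph (Σ i, W i) where
  Adj x y := ∃ h : x.1 = y.1, (H y.1).Adj (h ▸ x.2) y.2
  symm := ⟨by rintro ⟨i, a⟩ ⟨j, b⟩ ⟨h, hab⟩; obtain rfl : i = j := h; exact ⟨rfl, hab.symm⟩⟩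
  loopless := ⟨fun x ⟨_, hx⟩ ↦ (H x.1).loopless.irrefl _ hx⟩

variable {ι κ V : Type*} {W : ι → Type*} {U : κ → Type*} {H : ∀ i, SimpleGraph (W i)}
  {G : SimpleGraph V}

theorem sigmaGraph_adj_mk {i : ι} {a b : W i} :
    (sigmaGraph H).Adj ⟨i, a⟩ ⟨i, b⟩ ↔ (H i).Adj a b :=
  ⟨fun ⟨_, hab⟩ ↦ hab, fun hab ↦ ⟨rfl, hab⟩⟩

theorem fst_eq_of_sigmaGraph_reachable {x y : Σ i, W i} (h : (sigmaGraph H).Reachable x y) :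
    x.1 = y.1 := by
  obtain ⟨p⟩ := h
  induction p with
  | nil => rfl
  | cons hadj _ ih => exact hadj.1.trans ih

theorem sigmaGraph_reachable_iff (hH : ∀ i, (H i).Connected) {x y : Σ i, W i} :
    (sigmaGraph H).Reachable x y ↔ x.1 = y.1 := by
  refine ⟨fst_eq_of_sigmaGraph_reachable, ?_⟩
  obtain ⟨i, a⟩ := x
  obtain ⟨j, b⟩ := y
  rintro (rfl : i = j)
  exact ((hH i).preconnected a b).map ⟨Sigma.mk i, sigmaGraph_adj_mk.2⟩

/-- The connected components of a disjoint union of connected graphs are its summands. -/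
noncomputable def sigmaGraphComponentEquiv (hH : ∀ i, (H i).Connected) :
    (sigmaGraph H).ConnectedComponent ≃ ι :=
  Equiv.ofBijective
    (ConnectedComponent.lift Sigma.fst fun _ _ p _ ↦ fst_eq_of_sigmaGraph_reachable ⟨p⟩)
    ⟨fun c d ↦ ConnectedComponent.ind₂
        (fun _ _ hfst ↦ ConnectedComponent.sound ((sigmaGraph_reachable_iff hH).2 hfst)) c d,
      fun i ↦ ⟨(sigmaGraph H).connectedComponentMk ⟨i, (hH i).nonempty.some⟩, rfl⟩⟩

/-- A graph is the disjoint union of its connected components: matching the summands of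
`sigmaGraph H` with the components of `G` assembles into an isomorphism. -/
def isoOfComponentIsos (σ : ι ≃ G.ConnectedComponent) (θ : ∀ i, H i ≃g (σ i).toSimpleGraph) :
    sigmaGraph H ≃g G where
  toEquiv := (Equiv.sigmaCongr σ fun i ↦ (θ i).toEquiv).trans
    (Equiv.sigmaFiberEquiv G.connectedComponentMk)
  map_rel_iff' {x y} := by
    obtain ⟨i, a⟩ := x
    obtain ⟨j, b⟩ := y
    change G.Adj (θ i a) (θ j b) ↔ _
    constructor
    · intro hadj
      obtain rfl : i = j := σ.injective <| (θ i a).2.symm.trans <|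
        (ConnectedComponent.connectedComponentMk_eq_of_adj hadj).trans (θ j b).2
      exact sigmaGraph_adj_mk.2 ((θ i).map_adj_iff.1 hadj)
    · rintro ⟨hij, hab⟩
      obtain rfl : i = j := hij
      exact (θ i).map_adj_iff.2 hab

theorem isoOfComponentIsos_injective [∀ i, Nonempty (W i)] :
    Function.Injective fun x : Σ σ : ι ≃ G.ConnectedComponent, ∀ i, H i ≃g (σ i).toSimpleGraph ↦
      isoOfComponentIsos x.1 x.2 := by
  rintro ⟨σ, θ⟩ ⟨τ, η⟩ (h : isoOfComponentIsos σ θ = isoOfComponentIsos τ η)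
  have hval (i : ι) (a : W i) : (θ i a : V) = η i a := congrArg (fun φ ↦ φ ⟨i, a⟩) h
  obtain rfl : σ = τ := Equiv.ext fun i ↦ by
    have a := Classical.arbitrary (W i)
    rw [← (θ i a).2, ← (η i a).2, hval]
  exact Sigma.ext rfl <| heq_of_eq <| funext fun i ↦ DFunLike.ext _ _ fun a ↦
    Subtype.ext (hval i a)

theorem isoOfComponentIsos_surjective (hH : ∀ i, (H i).Connected) :
    Function.Surjective fun x : Σ σ : ι ≃ G.ConnectedComponent, ∀ i, H i ≃g (σ i).toSimpleGraph ↦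
      isoOfComponentIsos x.1 x.2 := by
  intro φ
  let σ : ι ≃ G.ConnectedComponent :=
    (sigmaGraphComponentEquiv hH).symm.trans φ.connectedComponentEquiv
  have hσ (x : Σ i, W i) : G.connectedComponentMk (φ x) = σ x.1 :=
    congrArg φ.connectedComponentEquiv <|
      ((sigmaGraphComponentEquiv hH).symm_apply_apply (connectedComponentMk _ x)).symm
  have hbij (i : ι) : Function.Bijective fun a : W i ↦ (⟨φ ⟨i, a⟩, hσ ⟨i, a⟩⟩ : σ i) := by
    constructor
    · intro a b hab
      exact sigma_mk_injective (φ.injective (congrArg Subtype.val hab))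
    · rintro ⟨v, hv⟩
      obtain ⟨⟨j, a⟩, rfl⟩ := φ.surjective v
      obtain rfl : j = i := σ.injective ((hσ ⟨j, a⟩).symm.trans hv)
      exact ⟨a, rfl⟩
  exact ⟨⟨σ, fun i ↦ ⟨Equiv.ofBijective _ (hbij i),
    fun {a b} ↦ φ.map_adj_iff.trans sigmaGraph_adj_mk⟩⟩, DFunLike.ext _ _ fun _ ↦ rfl⟩

/-- Writing `G` as a disjoint union of connected graphs taken from a list `P` amounts to
enumerating the components of `G` and identifying each of them with a member of the list. -/
noncomputable def sigmaGraphIsoEquiv (P : ∀ k, SimpleGraph (U k)) (hP : ∀ k, (P k).Connected) :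
    (Σ f : ι → κ, sigmaGraph (fun i ↦ P (f i)) ≃g G) ≃
      Σ σ : ι ≃ G.ConnectedComponent, ∀ i, Σ k, P k ≃g (σ i).toSimpleGraph :=
  calc
    (Σ f : ι → κ, sigmaGraph (fun i ↦ P (f i)) ≃g G) ≃
        Σ f : ι → κ, Σ σ : ι ≃ G.ConnectedComponent, ∀ i, P (f i) ≃g (σ i).toSimpleGraph :=
      Equiv.sigmaCongrRight fun f ↦
        have (i : ι) : Nonempty (U (f i)) := (hP (f i)).nonempty
        (Equiv.ofBijective _ ⟨isoOfComponentIsos_injective,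
          isoOfComponentIsos_surjective fun i ↦ hP (f i)⟩).symm
    _ ≃ Σ σ : ι ≃ G.ConnectedComponent, ∀ i, Σ k, P k ≃g (σ i).toSimpleGraph :=
      { toFun x := ⟨x.2.1, fun i ↦ ⟨x.1 i, x.2.2 i⟩⟩
        invFun y := ⟨fun i ↦ (y.2 i).1, y.1, fun i ↦ (y.2 i).2⟩ }

end SigmaGraph

section DoubleCounting

open SimpleGraph

theorem card_subtype_mul_card_eq_of_sigma_equiv {α β P Q : Type*} {A : α → β → Type*}
    {p : α → Prop} {q : β → Prop} (hpq : ∀ a b, A a b → (p a ↔ q b))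
    (hP : ∀ a, p a → Nonempty ((Σ b, A a b) ≃ P))
    (hQ : ∀ b, q b → Nonempty ((Σ a, A a b) ≃ Q)) :
    Nat.card {a // p a} * Nat.card P = Nat.card {b // q b} * Nat.card Q := by
  rw [← Nat.card_prod, ← Nat.card_prod]
  exact Nat.card_congr <| calc
    {a // p a} × P ≃ Σ a : {a // p a}, Σ b, A a b :=
      (Equiv.sigmaEquivProdOfEquiv fun a : {a // p a} ↦ (hP a a.2).some).symm
    _ ≃ Σ b : {b // q b}, Σ a, A a b :=
      { toFun x := ⟨⟨x.2.1, (hpq _ _ x.2.2).1 x.1.2⟩, x.1.1, x.2.2⟩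
        invFun y := ⟨⟨y.2.1, (hpq _ _ y.2.2).2 y.1.2⟩, y.1.1, y.2.2⟩ }
    _ ≃ {b // q b} × Q := Equiv.sigmaEquivProdOfEquiv fun b : {b // q b} ↦ (hQ b b.2).some

/-- An isomorphism from a fixed graph `H` to a varying graph `G` on `V` is a bijection of the
vertex sets, along which `G` is the transport of `H`. -/
def sigmaIsoEquiv {V W : Type*} (H : SimpleGraph W) :
    (Σ G : SimpleGraph V, H ≃g G) ≃ (W ≃ V) where
  toFun x := x.2.toEquiv
  invFun e := ⟨H.map e.toEmbedding, Iso.map e H⟩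
  left_inv := by
    rintro ⟨G, ⟨e, he⟩⟩
    obtain rfl : H.map e.toEmbedding = G := by
      ext v w
      obtain ⟨a, rfl⟩ := e.surjective v
      obtain ⟨b, rfl⟩ := e.surjective w
      exact (map_adj_apply (f := e.toEmbedding)).trans he.symm
    rfl

end DoubleCounting

section PathForest

open Finset SimpleGraph

/-- The disjoint union of paths on `g i + 2` vertices: the members of `I_{0,m}` are, up to
isomorphism, these graphs. Recording the excess `g i` over the minimal size 2 makes the size
vectors the solutions of `∑ i, g i = n - 2 * m`. -/
abbrev pathForest {ι : Type*} (g : ι → ℕ) : SimpleGraph (Σ i, Fin (g i + 2)) :=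
  sigmaGraph fun i ↦ pathGraph (g i + 2)

variable {ι V : Type*} {G : SimpleGraph V} {m n : ℕ}

theorem exists_componentIsos_of_pathForest_iso {g : ι → ℕ} (φ : pathForest g ≃g G) :
    ∃ σ : ι ≃ G.ConnectedComponent,
      ∀ i, Nonempty (pathGraph (g i + 2) ≃g (σ i).toSimpleGraph) := by
  obtain ⟨⟨σ, θ⟩, -⟩ := isoOfComponentIsos_surjective (fun i ↦ pathGraph_connected (g i + 1)) φ
  exact ⟨σ, fun i ↦ ⟨θ i⟩⟩

theorem card_le_ncard_supp_of_pathForest_iso [Fintype ι] {g : ι → ℕ} (φ : pathForest g ≃g G)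
    (ℓ : ℕ) :
    Nat.card {c : G.ConnectedComponent // ℓ ≤ c.supp.ncard} = #{i | ℓ - 2 ≤ g i} := by
  obtain ⟨σ, hσ⟩ := exists_componentIsos_of_pathForest_iso φ
  have hcard (i : ι) : (σ i).supp.ncard = g i + 2 := by
    obtain ⟨θ⟩ := hσ i
    exact (Nat.card_congr θ.toEquiv.symm).trans (Nat.card_fin _)
  rw [← Nat.subtype_card _ fun i ↦ mem_filter_univ i]
  exact Nat.card_congr (σ.subtypeEquiv fun i ↦ by rw [hcard, Nat.sub_le_iff_le_add]).symm

theorem pathsGraph_of_pathForest_iso {G : SimpleGraph (Fin n)} {g : Fin m → ℕ}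
    (φ : pathForest g ≃g G) : PathsGraph G m := by
  obtain ⟨σ, hσ⟩ := exists_componentIsos_of_pathForest_iso φ
  refine ⟨(Nat.card_congr σ.symm).trans (Nat.card_fin m), fun c ↦ ?_⟩
  obtain ⟨i, rfl⟩ := σ.surjective c
  exact isPathComponent_iff_nonempty_iso.2 ⟨g i, hσ i⟩

theorem mem_piAntidiag_iff_nonempty_sigma_fin_equiv {g : Fin m → ℕ} (hmn : 2 * m ≤ n) :
    g ∈ piAntidiag univ (n - 2 * m) ↔ Nonempty ((Σ i, Fin (g i + 2)) ≃ Fin n) := by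
  have hsum : Fintype.card (Σ i, Fin (g i + 2)) = ∑ i, g i + 2 * m := by
    simp [sum_add_distrib, mul_comm]
  rw [← Fintype.card_eq, hsum, Fintype.card_fin, mem_piAntidiag]
  simp only [mem_univ, implies_true, and_true]
  change ∑ i, g i = n - 2 * m ↔ _
  omega

theorem nonempty_sigma_pathForest_iso_equiv {G : SimpleGraph (Fin n)} (hG : PathsGraph G m) :
    Nonempty ((Σ g : Fin m → ℕ, pathForest g ≃g G) ≃ Equiv.Perm (Fin m) × (Fin m → Bool)) := by
  have hbool (c : G.ConnectedComponent) :
      Nonempty ((Σ k, pathGraph (k + 2) ≃g c.toSimpleGraph) ≃ Bool) := by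
    obtain ⟨k, ⟨φ⟩⟩ := isPathComponent_iff_nonempty_iso.1 (hG.2 c)
    exact nonempty_sigma_pathGraph_iso_equiv_bool φ
  let e : G.ConnectedComponent ≃ Fin m := Finite.equivFinOfCardEq hG.1
  exact ⟨calc
    (Σ g : Fin m → ℕ, pathForest g ≃g G) ≃
        Σ σ : Fin m ≃ G.ConnectedComponent, ∀ i, Σ k, pathGraph (k + 2) ≃g (σ i).toSimpleGraph :=
      sigmaGraphIsoEquiv (fun k ↦ pathGraph (k + 2)) fun k ↦ pathGraph_connected (k + 1)
    _ ≃ (Fin m ≃ G.ConnectedComponent) × (Fin m → Bool) :=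
      Equiv.sigmaEquivProdOfEquiv fun σ ↦ Equiv.piCongrRight fun i ↦ (hbool (σ i)).some
    _ ≃ Equiv.Perm (Fin m) × (Fin m → Bool) :=
      Equiv.prodCongrLeft fun _ ↦ Equiv.equivCongr (Equiv.refl _) e⟩

theorem card_pathsGraph_and_mul_factorial_mul_two_pow (hmn : 2 * m ≤ n)
    {R : SimpleGraph (Fin n) → Prop} {Q : (Fin m → ℕ) → Prop} [DecidablePred Q]
    (hQR : ∀ g G, pathForest g ≃g G → (Q g ↔ R G)) :
    Nat.card {G : SimpleGraph (Fin n) // PathsGraph G m ∧ R G} * (m.factorial * 2 ^ m) =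
      #{g ∈ piAntidiag (univ : Finset (Fin m)) (n - 2 * m) | Q g} * n.factorial := by
  have hcount := card_subtype_mul_card_eq_of_sigma_equiv
    (A := fun (g : Fin m → ℕ) (G : SimpleGraph (Fin n)) ↦ pathForest g ≃g G)
    (p := fun g ↦ g ∈ piAntidiag univ (n - 2 * m) ∧ Q g) (q := fun G ↦ PathsGraph G m ∧ R G)
    (P := Equiv.Perm (Fin n)) (Q := Equiv.Perm (Fin m) × (Fin m → Bool)) ?_ ?_ ?_
  · rw [← Nat.subtype_card _ fun g ↦ mem_filter]
    simpa [Fintype.card_perm] using hcount.symm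
  · intro g G φ
    exact and_congr (iff_of_true ((mem_piAntidiag_iff_nonempty_sigma_fin_equiv hmn).2 ⟨φ.toEquiv⟩)
      (pathsGraph_of_pathForest_iso φ)) (hQR g G φ)
  · rintro g ⟨hg, -⟩
    obtain ⟨e⟩ := (mem_piAntidiag_iff_nonempty_sigma_fin_equiv hmn).1 hg
    exact ⟨(sigmaIsoEquiv (pathForest g)).trans (Equiv.equivCongr e (Equiv.refl _))⟩
  · exact fun G hG ↦ nonempty_sigma_pathForest_iso_equiv hG.1

theorem card_pathsGraph_le_ncard_supp_mul_descFactorial_le (hmn : 2 * m ≤ n) (t ℓ : ℕ) :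
    Nat.card {G : SimpleGraph (Fin n) // PathsGraph G m ∧
        t ≤ Nat.card {c : G.ConnectedComponent // ℓ ≤ c.supp.ncard}} *
        (n - m - 1).descFactorial (t * (ℓ - 2)) ≤
      m.choose t * (n - 2 * m).descFactorial (t * (ℓ - 2)) *
        Nat.card {G : SimpleGraph (Fin n) // PathsGraph G m} := by
  have hall := card_pathsGraph_and_mul_factorial_mul_two_pow (m := m) hmn (Q := fun _ ↦ True)
    (R := fun _ ↦ True) fun _ _ _ ↦ Iff.rfl
  have hlarge := card_pathsGraph_and_mul_factorial_mul_two_pow (m := m) hmn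
    (Q := fun g ↦ t ≤ #{i | ℓ - 2 ≤ g i})
    (R := fun G ↦ t ≤ Nat.card {c : G.ConnectedComponent // ℓ ≤ c.supp.ncard})
    fun g G φ ↦ by rw [card_le_ncard_supp_of_pathForest_iso φ]
  have hbound := card_piAntidiag_filter_le_card_mul_descFactorial_le (ι := Fin m) t (ℓ - 2)
    (n - 2 * m)
  simp only [and_true, filter_true] at hall
  rw [Fintype.card_fin, show m + (n - 2 * m) - 1 = n - m - 1 by omega] at hbound
  refine Nat.le_of_mul_le_mul_right ?_ (show 0 < m.factorial * 2 ^ m by positivity)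
  calc
    _ = #{g ∈ piAntidiag (univ : Finset (Fin m)) (n - 2 * m) | t ≤ #{i | ℓ - 2 ≤ g i}} *
          (n - m - 1).descFactorial (t * (ℓ - 2)) * n.factorial := by
      rw [mul_right_comm, hlarge, mul_right_comm]
    _ ≤ m.choose t * (#(piAntidiag (univ : Finset (Fin m)) (n - 2 * m)) *
          (n - 2 * m).descFactorial (t * (ℓ - 2))) * n.factorial := Nat.mul_le_mul_right _ hbound
    _ = _ := by
      rw [mul_assoc _ _ (m.factorial * 2 ^ m), hall]
      ring

end PathForest

/-- For `S` uniform in `I_{0,m}`, the probability that at least `t` components of `S`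
have at least `ℓ` vertices is at most
`(1 + t/(m−t)) · (1/t!) · (m−1)_t · (n−2m)_{t(ℓ−2)} / (n−m−1)_{t(ℓ−2)}`. -/
theorem stmt10 (n m t ℓ : ℕ) (ht1 : 1 ≤ t) (htm : t ≤ m - 1) (hℓ : 2 ≤ ℓ)
    (hmn : 2 * m ≤ n) (htl : t * (ℓ - 2) ≤ n - m - 1) :
    (Nat.card {G : SimpleGraph (Fin n) // PathsGraph G m ∧
        t ≤ Nat.card {c : G.ConnectedComponent // ℓ ≤ c.supp.ncard}} : ℝ) /
      (Nat.card {G : SimpleGraph (Fin n) // PathsGraph G m} : ℝ) ≤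
      (1 + (t : ℝ) / ((m : ℝ) - t)) * (1 / (t.factorial : ℝ)) *
        (((m - 1).descFactorial t : ℝ) * ((n - 2 * m).descFactorial (t * (ℓ - 2)) : ℝ)) /
        ((n - m - 1).descFactorial (t * (ℓ - 2)) : ℝ) := by
  have hpos : (0 : ℝ) < (n - m - 1).descFactorial (t * (ℓ - 2)) :=
    mod_cast Nat.descFactorial_pos.2 htl
  rw [← mul_assoc, one_add_div_mul_descFactorial (by omega)]
  refine div_le_of_le_mul₀ (Nat.cast_nonneg _) (by positivity) ?_
  rw [div_mul_eq_mul_div, le_div_iff₀ hpos]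
  exact_mod_cast card_pathsGraph_le_ncard_supp_mul_descFactorial_le hmn t ℓ
end
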